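/- arXiv:1309.0228 — 14 statements merged into one kernel-verified Lean document; each statement's English description precedes it below -/
import Mathlib

section
/- Let L be a lattice and let a ∈ L be an upper-modular element of L such that the principal ideal (a] = {x ∈ L : x ≤ a}, with the induced lattice structure, is a modular lattice. Then every element b ∈ L with b ≤ a is an upper-modular element of L. -/
/-- An element `x` of a lattice `L` is upper-modular if for all `y, z ∈ L` with `y ≤ x`
one has `x ⊓ (y ⊔ z) = y ⊔ (x ⊓ z)`. -/
def IsUpperModularElement {L : Type*} [Lattice L] (x : L) : Prop :=
  ∀ y z : L, y ≤ x → x ⊓ (y ⊔ z) = y ⊔ (x ⊓ z)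

/-- If `a` is an upper-modular element of a lattice `L` and the principal ideal
`(a] = {x ∈ L : x ≤ a}` (with the induced lattice structure, whose meets and joins are
those of `L`) is a modular lattice, then every `b ≤ a` is an upper-modular element of `L`. -/
theorem upperModular_of_le_of_upperModular {L : Type*} [Lattice L] (a : L)
    (ha : IsUpperModularElement a)
    (hmod : ∀ x y z : L, x ≤ a → y ≤ a → z ≤ a → x ≤ z → x ⊔ (y ⊓ z) = (x ⊔ y) ⊓ z) :
    ∀ b : L, b ≤ a → IsUpperModularElement b := by
  intro b hb y z hy
  have h1 := ha y z (hy.trans hb)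
  have h2 := hmod y (a ⊓ z) b (hy.trans hb) inf_le_left hb hy
  have hba : b ⊓ a = b := inf_eq_left.mpr hb
  calc b ⊓ (y ⊔ z) = b ⊓ (a ⊓ (y ⊔ z)) := by rw [← inf_assoc, hba]
    _ = (y ⊔ (a ⊓ z)) ⊓ b := by rw [h1, inf_comm]
    _ = y ⊔ ((a ⊓ z) ⊓ b) := h2.symm
    _ = y ⊔ (b ⊓ z) := by rw [inf_comm (a ⊓ z) b, ← inf_assoc, hba]
end

section
/- Let L be a lattice and let a ∈ L be a codistributive element of L such that the principal ideal (a] = {x ∈ L : x ≤ a}, with the induced lattice structure, is a distributive lattice. Then every element b ∈ L with b ≤ a is a codistributive element of L. -/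
/-- An element `x` of a lattice `L` is codistributive if for all `y, z ∈ L`
one has `x ⊓ (y ⊔ z) = (x ⊓ y) ⊔ (x ⊓ z)`. -/
def IsCodistributiveElement {L : Type*} [Lattice L] (x : L) : Prop :=
  ∀ y z : L, x ⊓ (y ⊔ z) = (x ⊓ y) ⊔ (x ⊓ z)

/-- If `a` is a codistributive element of a lattice `L` and the principal ideal
`(a] = {x ∈ L : x ≤ a}` (with the induced lattice structure, whose meets and joins are
those of `L`) is a distributive lattice, then every `b ≤ a` is a codistributive element
of `L`. -/
theorem codistributive_of_le_of_codistributive {L : Type*} [Lattice L] (a : L)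
    (ha : IsCodistributiveElement a)
    (hdist : ∀ x y z : L, x ≤ a → y ≤ a → z ≤ a → x ⊓ (y ⊔ z) = (x ⊓ y) ⊔ (x ⊓ z)) :
    ∀ b : L, b ≤ a → IsCodistributiveElement b := by
  intro b hb y z
  have key : ∀ w : L, b ⊓ w = b ⊓ (a ⊓ w) := fun w => by
    rw [← inf_assoc, inf_eq_left.mpr hb]
  rw [key (y ⊔ z), ha y z, hdist b (a ⊓ y) (a ⊓ z) hb inf_le_left inf_le_left, ← key y, ← key z]
end

section
/- Let S be a non-empty set and let α be an equivalence relation on S. Then α is a modular element of the lattice Eq(S) of all equivalence relations on S if and only if α has at most one non-singleton equivalence class, i.e., at most one equivalence class of α contains more than one element. -/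
/-- An element `x` of a lattice `L` is modular if for all `y, z ∈ L` with `y ≤ z`
one has `(x ⊔ y) ⊓ z = (x ⊓ z) ⊔ y`. -/
def IsModularElement {L : Type*} [Lattice L] (x : L) : Prop :=
  ∀ y z : L, y ≤ z → (x ⊔ y) ⊓ z = (x ⊓ z) ⊔ y

/-- An equivalence relation `α` on `S` has at most one non-singleton class:
any two elements lying in non-singleton classes of `α` are `α`-equivalent. -/
def HasAtMostOneNonSingletonClass {S : Type*} (α : Setoid S) : Prop :=
  ∀ x y : S, (∃ x', x' ≠ x ∧ α x x') → (∃ y', y' ≠ y ∧ α y y') → α x y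

/-- An equivalence relation `α` on a non-empty set `S` is a modular element of the
lattice `Eq(S)` of all equivalence relations on `S` if and only if `α` has at most one
non-singleton class. -/
theorem isModularElement_setoid_iff {S : Type*} [Nonempty S] (α : Setoid S) :
    IsModularElement α ↔ HasAtMostOneNonSingletonClass α := by
  constructor
  · rintro h a b ⟨a', ha, haa⟩ ⟨b', hb, hbb⟩
    by_contra hab
    have h1 : a ≠ b := fun e => hab (e ▸ α.refl' a)
    have h2 : a ≠ b' := fun e => hab (e ▸ α.symm' hbb)
    have h3 : a' ≠ b := fun e => hab (e ▸ haa)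
    have h4 : ¬ α a' b' := fun e => hab (α.trans' haa (α.trans' e (α.symm' hbb)))
    have h5 : ¬ α b a := fun e => hab (α.symm' e)
    have h6 : ¬ α b' a' := fun e => h4 (α.symm' e)
    let y : Setoid S := ⟨fun u v => u = v ∨ ((u = a' ∨ u = b') ∧ (v = a' ∨ v = b')),
      ⟨fun _ => Or.inl rfl, by grind, by grind⟩⟩
    let z : Setoid S := ⟨fun u v => u = v ∨ ((u = a' ∨ u = b') ∧ (v = a' ∨ v = b')) ∨
        ((u = a ∨ u = b) ∧ (v = a ∨ v = b)),
      ⟨fun _ => Or.inl rfl, by grind, by grind⟩⟩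
    have hy : ∀ u v, y u v ↔ (u = v ∨ ((u = a' ∨ u = b') ∧ (v = a' ∨ v = b'))) :=
      fun _ _ => Iff.rfl
    have hz : ∀ u v, z u v ↔ (u = v ∨ ((u = a' ∨ u = b') ∧ (v = a' ∨ v = b')) ∨
        ((u = a ∨ u = b) ∧ (v = a ∨ v = b))) := fun _ _ => Iff.rfl
    have hyz : y ≤ z := by
      intro u v huv
      rw [hy] at huv
      rw [hz]
      tauto
    have hle : α ⊓ z ≤ y := by
      intro u v huv
      obtain ⟨p, q⟩ := Setoid.inf_iff_and.1 huv
      rw [hz] at q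
      rw [hy]
      rcases q with q | q | ⟨rfl | rfl, rfl | rfl⟩ <;> tauto
    have key : ((α ⊔ y) ⊓ z) a b := by
      refine Setoid.inf_iff_and.2 ⟨?_, (hz _ _).2 (by tauto)⟩
      have l1 : α ≤ α ⊔ y := le_sup_left
      have l2 : y ≤ α ⊔ y := le_sup_right
      exact (α ⊔ y).trans' (l1 haa) ((α ⊔ y).trans'
        (l2 ((hy a' b').2 (by tauto))) (l1 (α.symm' hbb)))
    rw [h y z hyz, sup_eq_right.2 hle, hy] at key
    grind
  · intro h y z hyz
    apply le_antisymm
    · let N : S → Prop := fun u => ∃ u', u' ≠ u ∧ α u u'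
      let T : Setoid S := ⟨fun a b => y a b ∨ ((∃ u, N u ∧ y a u) ∧ ∃ v, N v ∧ y b v), by
        refine ⟨fun a => Or.inl (y.refl' a), ?_, ?_⟩
        · rintro a b (p | ⟨p, q⟩)
          · exact Or.inl (y.symm' p)
          · exact Or.inr ⟨q, p⟩
        · rintro a b c (p | ⟨p, q⟩) (p' | ⟨p', q'⟩)
          · exact Or.inl (y.trans' p p')
          · obtain ⟨u, hu, hbu⟩ := p'
            exact Or.inr ⟨⟨u, hu, y.trans' p hbu⟩, q'⟩
          · obtain ⟨u, hu, hbu⟩ := q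
            exact Or.inr ⟨p, ⟨u, hu, y.trans' (y.symm' p') hbu⟩⟩
          · exact Or.inr ⟨p, q'⟩⟩
      have hT : α ⊔ y ≤ T := by
        refine sup_le ?_ (fun a b hab => Or.inl hab)
        intro a b hab
        by_cases e : a = b
        · exact e ▸ T.refl' a
        · exact Or.inr ⟨⟨a, ⟨b, Ne.symm e, hab⟩, y.refl' a⟩,
            ⟨b, ⟨a, e, α.symm' hab⟩, y.refl' b⟩⟩
      intro a b hab
      obtain ⟨p, q⟩ := Setoid.inf_iff_and.1 hab
      have l1 : α ⊓ z ≤ α ⊓ z ⊔ y := le_sup_left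
      have l2 : y ≤ α ⊓ z ⊔ y := le_sup_right
      rcases hT p with r | ⟨⟨u, hu, hau⟩, ⟨v, hv, hbv⟩⟩
      · exact l2 r
      · have huv : (α ⊓ z) u v := Setoid.inf_iff_and.2 ⟨h u v hu hv,
          z.trans' (z.symm' (hyz hau)) (z.trans' q (hyz hbv))⟩
        exact Setoid.trans' _ (l2 hau) (Setoid.trans' _ (l1 huv) (l2 (y.symm' hbv)))
    · exact sup_le (le_inf (inf_le_left.trans le_sup_left) inf_le_right)
        (le_inf le_sup_right hyz)
end

section
/- Let S be a non-empty set and let α be an equivalence relation on S. Then α is an upper-modular element of the lattice Eq(S) of all equivalence relations on S if and only if α has at most one non-singleton equivalence class, i.e., at most one equivalence class of α contains more than one element. -/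
/-- An equivalence relation `α` on a non-empty set `S` is an upper-modular element of the
lattice `Eq(S)` of all equivalence relations on `S` if and only if `α` has at most one
non-singleton class. -/
theorem isUpperModularElement_setoid_iff {S : Type*} [Nonempty S] (α : Setoid S) :
    IsUpperModularElement α ↔ HasAtMostOneNonSingletonClass α := by
  classical
  constructor
  · rintro h x y ⟨x', hx, hxx⟩ ⟨y', hy, hyy⟩
    by_contra hn
    have n1 : x ≠ y := fun e => hn (e ▸ α.refl' x)
    have n2 : x ≠ y' := fun e => hn (e ▸ α.symm' hyy)
    have n3 : x' ≠ y := fun e => hn (e ▸ hxx)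
    have n4 : x' ≠ y' := fun e => hn (α.trans' hxx (e ▸ α.symm' hyy))
    have n5 : ¬ α x' y' := fun e => hn (α.trans' hxx (α.trans' e (α.symm' hyy)))
    let β : Setoid S := Setoid.ker (fun s => if s = x' then x else s)
    let γ : Setoid S := Setoid.ker (fun s => if s = y then x else if s = y' then x' else s)
    have hβ : β ≤ α := by
      intro u v huv
      have huv : (if u = x' then x else u) = (if v = x' then x else v) := huv
      have r := α.refl' u
      have s := α.symm' hxx
      have t := α.refl' x'
      split_ifs at huv <;> subst_vars <;> assumption
    have hγ : α ⊓ γ ≤ β := by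
      intro u v huv
      obtain ⟨h1, h2⟩ := huv
      have h1 : α u v := h1
      have h1' : α v u := α.symm' h1
      have hn' : ¬ α y x := fun e => hn (α.symm' e)
      have h2 : (if u = y then x else if u = y' then x' else u)
        = (if v = y then x else if v = y' then x' else v) := h2
      have e : u = v := by
        split_ifs at h2 <;> subst_vars <;> first | rfl | contradiction
      subst e
      exact β.refl' u
    have key : (β ⊔ (α ⊓ γ)) y y' := by
      rw [← h β γ hβ]
      refine ⟨hyy, ?_⟩
      have a1 : (β ⊔ γ) x x' := (le_sup_left : β ≤ β ⊔ γ) (by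
        show (if x = x' then x else x) = (if x' = x' then x else x')
        simp)
      have a2 : (β ⊔ γ) x y := (le_sup_right : γ ≤ β ⊔ γ) (by
        show (if x = y then x else if x = y' then x' else x)
          = (if y = y then x else if y = y' then x' else y)
        simp [n1, n2])
      have a3 : (β ⊔ γ) x' y' := (le_sup_right : γ ≤ β ⊔ γ) (by
        show (if x' = y then x else if x' = y' then x' else x')
          = (if y' = y then x else if y' = y' then x' else y')
        simp [n3, hy])
      exact (β ⊔ γ).trans' ((β ⊔ γ).symm' a2) ((β ⊔ γ).trans' a1 a3)
    have k2 : β y y' := (sup_le le_rfl hγ : β ⊔ (α ⊓ γ) ≤ β) key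
    have k2 : (if y = x' then x else y) = (if y' = x' then x else y') := k2
    rw [if_neg n3.symm, if_neg n4.symm] at k2
    exact hy k2.symm
  · intro h β γ hβ
    apply le_antisymm
    · rintro a b ⟨hab, hj⟩
      have hab : α a b := hab
      by_cases e : b = a
      · subst e
        exact Setoid.refl' _ _
      set δ := β ⊔ (α ⊓ γ) with hδ
      have hβδ : ∀ {u v}, β u v → δ u v := fun k => (le_sup_left : β ≤ δ) k
      have hγδ : ∀ {u v}, α u v → γ u v → δ u v :=
        fun k l => (le_sup_right : α ⊓ γ ≤ δ) ⟨k, l⟩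
      let P : S → Prop := fun v => ∃ c, α a c ∧ δ a c ∧ γ c v
      have stepβ : ∀ u v, β u v → P u → P v := by
        rintro u v k ⟨c, h1, h2, h3⟩
        by_cases f : v = u
        · exact f ▸ ⟨c, h1, h2, h3⟩
        have kα : α u v := hβ k
        have hu : α a u := h a u ⟨b, e, hab⟩ ⟨v, f, kα⟩
        exact ⟨v, α.trans' hu kα, δ.trans' (δ.trans' h2
          (hγδ (α.trans' (α.symm' h1) hu) h3)) (hβδ k), γ.refl' v⟩
      have stepγ : ∀ u v, γ u v → P u → P v := by
        rintro u v k ⟨c, h1, h2, h3⟩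
        exact ⟨c, h1, h2, γ.trans' h3 k⟩
      have hle : β ⊔ γ ≤ Setoid.ker P := by
        apply sup_le
        · intro u v k
          exact propext ⟨stepβ u v k, stepβ v u (β.symm' k)⟩
        · intro u v k
          exact propext ⟨stepγ u v k, stepγ v u (γ.symm' k)⟩
      have hP : P a = P b := hle hj
      have hPa : P a := ⟨a, α.refl' a, δ.refl' a, γ.refl' a⟩
      obtain ⟨c, h1, h2, h3⟩ := hP ▸ hPa
      exact δ.trans' h2 (hγδ (α.trans' (α.symm' h1) hab) h3)
    · exact sup_le (le_inf hβ le_sup_left) (inf_le_inf_left _ le_sup_right)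
end

section
/- Let S be a non-empty set and let α be an equivalence relation on S. Then α is a modular element of the lattice Eq(S) of all equivalence relations on S if and only if α is an upper-modular element of Eq(S). -/
theorem chain_aux {S : Type*} (u z w : Setoid S) (C : S → Prop)
    (hzw : ∀ c d, C c → C d → z c d → w c d)
    (hu : ∀ a b, u a b → a ≠ b → C a ∧ C b ∧ w a b) (a b : S) (h : (u ⊔ z) a b) :
    z a b ∨ ∃ c d, C c ∧ C d ∧ z a c ∧ w c d ∧ z d b := by
  let R : Setoid S :=
    { r := fun a b => z a b ∨ ∃ c d, C c ∧ C d ∧ z a c ∧ w c d ∧ z d b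
      iseqv := by
        refine ⟨fun a => Or.inl (z.refl a), ?_, ?_⟩
        · rintro a b (h | ⟨c, d, hc, hd, h1, h2, h3⟩)
          · exact Or.inl (z.symm h)
          · exact Or.inr ⟨d, c, hd, hc, z.symm h3, w.symm h2, z.symm h1⟩
        · rintro a b e (h | ⟨c, d, hc, hd, h1, h2, h3⟩) (h' | ⟨c', d', hc', hd', h1', h2', h3'⟩)
          · exact Or.inl (z.trans h h')
          · exact Or.inr ⟨c', d', hc', hd', z.trans h h1', h2', h3'⟩
          · exact Or.inr ⟨c, d, hc, hd, h1, h2, z.trans h3 h'⟩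
          · exact Or.inr ⟨c, d', hc, hd', h1,
              w.trans h2 (w.trans (hzw d c' hd hc' (z.trans h3 h1')) h2'), h3'⟩ }
  have hle : u ⊔ z ≤ R := by
    apply sup_le
    · intro a b hab
      by_cases e : a = b
      · subst e; exact Or.inl (z.refl a)
      · obtain ⟨h1, h2, h3⟩ := hu a b hab e
        exact Or.inr ⟨a, b, h1, h2, z.refl a, h3, z.refl b⟩
    · intro a b hab
      exact Or.inl hab
  exact hle h

/-- At most one non-singleton class. -/
def OneClass {S : Type*} (x : Setoid S) : Prop :=
  ∀ a b c d, x a b → a ≠ b → x c d → c ≠ d → x a c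

theorem modular_of_oneClass {S : Type*} (x : Setoid S) (h : OneClass x) :
    IsModularElement x := by
  intro y z hyz
  apply le_antisymm
  · intro a b hab
    obtain ⟨h1, h2⟩ : (x ⊔ y) a b ∧ z a b := hab
    have hy : y ≤ (x ⊓ z) ⊔ y := le_sup_right
    have hx : x ⊓ z ≤ (x ⊓ z) ⊔ y := le_sup_left
    rcases chain_aux x y x (fun c => ∃ c', x c c' ∧ c ≠ c')
      (fun c d ⟨c', hc, hc'⟩ ⟨d', hd, hd'⟩ _ => h c c' d d' hc hc' hd hd')
      (fun a b hab e => ⟨⟨b, hab, e⟩, ⟨a, x.symm hab, e.symm⟩, hab⟩) a b h1 with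
      h3 | ⟨c, d, -, -, h3, h4, h5⟩
    · exact hy h3
    · have h6 : z c d := z.trans (z.symm (hyz h3)) (z.trans h2 (z.symm (hyz h5)))
      have h7 : (x ⊓ z) c d := ⟨h4, h6⟩
      exact Setoid.trans' _ (hy h3) (Setoid.trans' _ (hx h7) (hy h5))
  · exact sup_le (le_inf (inf_le_left.trans le_sup_left) inf_le_right) (le_inf le_sup_right hyz)

theorem upper_of_oneClass {S : Type*} (x : Setoid S) (h : OneClass x) :
    IsUpperModularElement x := by
  intro y z hyx
  apply le_antisymm
  · intro a b hab
    obtain ⟨h1, h2⟩ : x a b ∧ (y ⊔ z) a b := hab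
    have hy : y ≤ y ⊔ (x ⊓ z) := le_sup_left
    have hx : x ⊓ z ≤ y ⊔ (x ⊓ z) := le_sup_right
    by_cases e : a = b
    · subst e; exact Setoid.refl' _ a
    rcases chain_aux y z (y ⊔ (x ⊓ z)) (fun c => ∃ c', x c c' ∧ c ≠ c')
      (fun c d ⟨c', hc, hc'⟩ ⟨d', hd, hd'⟩ hz => hx ⟨h c c' d d' hc hc' hd hd', hz⟩)
      (fun a b hab e => ⟨⟨b, hyx hab, e⟩, ⟨a, x.symm (hyx hab), e.symm⟩, hy hab⟩) a b h2 with
      h3 | ⟨c, d, ⟨c', hc, hc'⟩, ⟨d', hd, hd'⟩, h3, h4, h5⟩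
    · exact hx ⟨h1, h3⟩
    · have h6 : (x ⊓ z) a c := ⟨h a b c c' h1 e hc hc', h3⟩
      have h7 : (x ⊓ z) d b := ⟨h d d' b a hd hd' (x.symm h1) (Ne.symm e), h5⟩
      exact Setoid.trans' _ (hx h6) (Setoid.trans' _ h4 (hx h7))
  · exact sup_le (le_inf hyx le_sup_left) (le_inf inf_le_left (inf_le_right.trans le_sup_right))

open Classical in
/-- The equivalence with classes `{a, c}`, `{b, d}`. -/
noncomputable def twoPairs {S : Type*} (a b c d : S) : Setoid S :=
  Setoid.ker (fun s => if s = c then a else if s = d then b else s)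

open Classical in
/-- The equivalence with only the nontrivial class `{a, c}`. -/
noncomputable def onePair {S : Type*} (a c : S) : Setoid S :=
  Setoid.ker (fun s => if s = c then a else s)

theorem onePair_iff {S : Type*} (a c s t : S) : onePair a c s t ↔
    s = t ∨ (s = a ∧ t = c) ∨ (s = c ∧ t = a) := by
  unfold onePair
  rw [Setoid.ker_def]
  grind

theorem twoPairs_iff {S : Type*} (a b c d s t : S) (h1 : a ≠ b) (h2 : c ≠ d) (h3 : a ≠ d)
    (h4 : b ≠ c) : twoPairs a b c d s t ↔
    s = t ∨ (s = a ∧ t = c) ∨ (s = c ∧ t = a) ∨ (s = b ∧ t = d) ∨ (s = d ∧ t = b) := by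
  unfold twoPairs
  rw [Setoid.ker_def]
  grind

theorem inf_twoPairs {S : Type*} (x : Setoid S) (a b c d : S) (hab : x a b) (h1 : a ≠ b)
    (hcd : x c d) (h2 : c ≠ d) (hac : ¬ x a c) : 
    a ≠ d ∧ b ≠ c ∧ a ≠ c ∧ x ⊓ twoPairs a b c d = ⊥ := by
  have h3 : a ≠ d := by rintro rfl; exact hac (x.symm hcd)
  have h4 : b ≠ c := by rintro rfl; exact hac hab
  have h5 : a ≠ c := by rintro rfl; exact hac (x.refl a)
  have h6 : ¬ x b d := fun h => hac (x.trans hab (x.trans h (x.symm hcd)))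
  refine ⟨h3, h4, h5, ?_⟩
  rw [eq_bot_iff]
  intro s t hst
  obtain ⟨hx, hz⟩ : x s t ∧ twoPairs a b c d s t := hst
  rw [twoPairs_iff _ _ _ _ _ _ h1 h2 h3 h4] at hz
  rcases hz with h | ⟨rfl, rfl⟩ | ⟨rfl, rfl⟩ | ⟨rfl, rfl⟩ | ⟨rfl, rfl⟩
  · exact h
  · exact absurd hx hac
  · exact absurd (x.symm hx) hac
  · exact absurd hx h6
  · exact absurd (x.symm hx) h6

theorem oneClass_of_modular {S : Type*} (x : Setoid S) (h : IsModularElement x) :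
    OneClass x := by
  intro a b c d hab h1 hcd h2
  by_contra hac
  obtain ⟨h3, h4, h5, h6⟩ := inf_twoPairs x a b c d hab h1 hcd h2 hac
  have key := h (onePair a c) (twoPairs a b c d) (by
    intro s t hst
    rw [onePair_iff] at hst
    rw [twoPairs_iff _ _ _ _ _ _ h1 h2 h3 h4]
    tauto)
  rw [h6, bot_sup_eq] at key
  have hx : x ≤ x ⊔ onePair a c := le_sup_left
  have hy : onePair a c ≤ x ⊔ onePair a c := le_sup_right
  have hbd : ((x ⊔ onePair a c) ⊓ twoPairs a b c d) b d := by
    refine ⟨Setoid.trans' _ (hx (x.symm hab)) (Setoid.trans' _ (hy ?_) (hx hcd)), ?_⟩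
    · exact (onePair_iff _ _ _ _).2 (by tauto)
    · exact (twoPairs_iff _ _ _ _ _ _ h1 h2 h3 h4).2 (by tauto)
  rw [key, onePair_iff] at hbd
  rcases hbd with rfl | ⟨rfl, -⟩ | ⟨rfl, -⟩
  · exact hac (x.trans hab (x.symm hcd))
  · exact h1 rfl
  · exact h4 rfl

theorem oneClass_of_upper {S : Type*} (x : Setoid S) (h : IsUpperModularElement x) :
    OneClass x := by
  intro a b c d hab h1 hcd h2
  by_contra hac
  obtain ⟨h3, h4, h5, h6⟩ := inf_twoPairs x a b c d hab h1 hcd h2 hac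
  have key := h (onePair a b) (twoPairs a b c d) (by
    intro s t hst
    rw [onePair_iff] at hst
    rcases hst with rfl | ⟨rfl, rfl⟩ | ⟨rfl, rfl⟩
    · exact x.refl _
    · exact hab
    · exact x.symm hab)
  rw [h6, sup_bot_eq] at key
  have hy : onePair a b ≤ onePair a b ⊔ twoPairs a b c d := le_sup_left
  have hz : twoPairs a b c d ≤ onePair a b ⊔ twoPairs a b c d := le_sup_right
  have hbd : (x ⊓ (onePair a b ⊔ twoPairs a b c d)) c d := by
    refine ⟨hcd, Setoid.trans' _ (hz (y := a) ?_) (Setoid.trans' _ (hy (y := b) ?_) (hz ?_))⟩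
    · exact (twoPairs_iff _ _ _ _ _ _ h1 h2 h3 h4).2 (by tauto)
    · exact (onePair_iff _ _ _ _).2 (by tauto)
    · exact (twoPairs_iff _ _ _ _ _ _ h1 h2 h3 h4).2 (by tauto)
  rw [key, onePair_iff] at hbd
  rcases hbd with rfl | ⟨rfl, -⟩ | ⟨rfl, -⟩
  · exact h2 rfl
  · exact h5 rfl
  · exact h4 rfl

/-- An equivalence relation `α` on a non-empty set `S` is a modular element of the
lattice `Eq(S)` of all equivalence relations on `S` if and only if it is an
upper-modular element of `Eq(S)`. -/
theorem isModularElement_setoid_iff_isUpperModularElement {S : Type*} [Nonempty S]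
    (α : Setoid S) : IsModularElement α ↔ IsUpperModularElement α := by
  exact ⟨fun h => upper_of_oneClass α (oneClass_of_modular α h),
    fun h => modular_of_oneClass α (oneClass_of_upper α h)⟩
end

section
/- Let L be a lattice with a least element ⊥ and let a ∈ L be an atom of L that is also a neutral element of L. Then an element x ∈ L is a modular element of L if and only if x ⊔ a is a modular element of L. -/
/-- An element `x` of a lattice `L` is neutral if for all `y, z ∈ L` one has
`(x ⊔ y) ⊓ (y ⊔ z) ⊓ (z ⊔ x) = (x ⊓ y) ⊔ (y ⊓ z) ⊔ (z ⊓ x)`. -/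
def IsNeutralElement {L : Type*} [Lattice L] (x : L) : Prop :=
  ∀ y z : L, (x ⊔ y) ⊓ (y ⊔ z) ⊓ (z ⊔ x) = (x ⊓ y) ⊔ (y ⊓ z) ⊔ (z ⊓ x)

theorem neutral_sup_inf {L : Type*} [Lattice L] {a : L} (hn : IsNeutralElement a) (y z : L) :
    a ⊔ (y ⊓ z) = (a ⊔ y) ⊓ (a ⊔ z) := by
  have h1 := hn y z
  have hw : a ≤ (a ⊔ y) ⊓ (a ⊔ z) := le_inf le_sup_left le_sup_left
  have h2 := hn (y ⊔ z) ((a ⊔ y) ⊓ (a ⊔ z))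
  have e1 : (a ⊔ y) ⊓ (y ⊔ z) ⊓ (z ⊔ a) = (y ⊔ z) ⊓ ((a ⊔ y) ⊓ (a ⊔ z)) := by
    rw [sup_comm z a]; ac_rfl
  apply le_antisymm
  · exact le_inf (sup_le_sup_left inf_le_left _) (sup_le_sup_left inf_le_right _)
  · have h3 : (a ⊔ y) ⊓ (a ⊔ z) ≤ (a ⊔ (y ⊔ z)) ⊓ (y ⊔ z ⊔ (a ⊔ y) ⊓ (a ⊔ z)) ⊓
        ((a ⊔ y) ⊓ (a ⊔ z) ⊔ a) :=
      le_inf (le_inf (inf_le_left.trans (sup_le_sup_left le_sup_left _)) le_sup_right)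
        le_sup_left
    rw [h2, ← e1, h1] at h3
    refine h3.trans ?_
    refine sup_le (sup_le (inf_le_left.trans le_sup_left) (sup_le (sup_le ?_ ?_) ?_)) ?_
    · exact inf_le_left.trans le_sup_left
    · exact le_sup_right
    · exact inf_le_right.trans le_sup_left
    · exact inf_le_right.trans le_sup_left

theorem neutral_dual {L : Type*} [Lattice L] {a : L} (hn : IsNeutralElement a) :
    IsNeutralElement (OrderDual.toDual a) := by
  intro y z
  exact (hn (OrderDual.ofDual y) (OrderDual.ofDual z)).symm

theorem neutral_inf_sup {L : Type*} [Lattice L] {a : L} (hn : IsNeutralElement a) (y z : L) :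
    a ⊓ (y ⊔ z) = (a ⊓ y) ⊔ (a ⊓ z) :=
  neutral_sup_inf (neutral_dual hn) (OrderDual.toDual y) (OrderDual.toDual z)

theorem neutral_cancel_le {L : Type*} [Lattice L] {a : L} (hn : IsNeutralElement a) {y z : L}
    (hyz : y ≤ z) (h1 : a ⊔ y = a ⊔ z) (h2 : a ⊓ y = a ⊓ z) : y = z := by
  apply le_antisymm hyz
  have h := hn y z
  have h3 : z ≤ (a ⊔ y) ⊓ (y ⊔ z) ⊓ (z ⊔ a) :=
    le_inf (le_inf (h1 ▸ le_sup_right) le_sup_right) le_sup_left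
  rw [h] at h3
  refine h3.trans (sup_le (sup_le inf_le_right inf_le_left) ?_)
  rw [inf_comm, ← h2]
  exact inf_le_right

theorem neutral_cancel {L : Type*} [Lattice L] {a : L} (hn : IsNeutralElement a) {y z : L}
    (h1 : a ⊔ y = a ⊔ z) (h2 : a ⊓ y = a ⊓ z) : y = z := by
  have e1 : y ⊓ z = y := by
    apply neutral_cancel_le hn inf_le_left
    · rw [neutral_sup_inf hn, h1, inf_idem]
    · rw [← inf_assoc, h2, inf_assoc, inf_idem]
  have e2 : y ⊓ z = z := by
    apply neutral_cancel_le hn inf_le_right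
    · rw [neutral_sup_inf hn, h1, inf_idem]
    · rw [← inf_assoc, h2, inf_assoc, inf_idem]
  exact e1.symm.trans e2

/-- If `a` is an atom and a neutral element of a lattice `L` with least element, then
an element `x ∈ L` is a modular element of `L` if and only if `x ⊔ a` is. -/
theorem isModularElement_sup_atom_iff {L : Type*} [Lattice L] [OrderBot L] (a : L)
    (ha : IsAtom a) (hn : IsNeutralElement a) (x : L) :
    IsModularElement x ↔ IsModularElement (x ⊔ a) := by
  have S := neutral_sup_inf hn
  have I := neutral_inf_sup hn
  constructor
  · intro hx y z hyz
    apply neutral_cancel hn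
    · have h : a ⊔ (x ⊔ y) ⊓ z = a ⊔ (x ⊓ z ⊔ y) := by rw [hx y z hyz]
      have e1 : a ⊔ (x ⊔ a ⊔ y) = a ⊔ (x ⊔ y) := by
        rw [sup_comm x a, sup_assoc, ← sup_assoc, sup_idem]
      have e2 : a ⊔ (x ⊔ a) = a ⊔ x := by
        rw [sup_comm x a, ← sup_assoc, sup_idem]
      rw [S, e1, ← S, h, ← sup_assoc, ← sup_assoc, S, S, e2]
    · have e1 : a ⊓ (x ⊔ a ⊔ y) = a := inf_eq_left.2 (le_sup_right.trans le_sup_left)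
      have e2 : a ⊓ (x ⊔ a) = a := inf_eq_left.2 le_sup_right
      rw [I, ← inf_assoc, ← inf_assoc, e1, e2]
      exact (sup_eq_left.2 (inf_le_inf_left a hyz)).symm
  · intro hx y z hyz
    apply neutral_cancel hn
    · have h := hx (a ⊔ y) (a ⊔ z) (sup_le_sup_left hyz a)
      have e1 : x ⊔ a ⊔ (a ⊔ y) = a ⊔ (x ⊔ y) := by
        rw [sup_comm x a, sup_sup_sup_comm, sup_idem]
      rw [e1, ← S, sup_comm x a, ← S] at h
      rw [h, sup_sup_sup_comm, sup_idem]
    · rw [I, ← inf_assoc, ← inf_assoc, I]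
      have e : a ⊓ y ≤ a ⊓ z := inf_le_inf_left a hyz
      rcases ha.le_iff.1 (inf_le_left : a ⊓ x ≤ a) with h | h
      · rw [h, bot_sup_eq, bot_inf_eq, bot_sup_eq]
        exact inf_eq_left.2 (inf_le_right.trans hyz)
      · rw [h, sup_eq_left.2 (inf_le_left : a ⊓ y ≤ a), sup_eq_left.2 e]
end

section
/- Let L be a lattice with a least element ⊥ and let a ∈ L be an atom of L that is also a neutral element of L. Then an element x ∈ L is a lower-modular element of L if and only if x ⊔ a is a lower-modular element of L. -/
def IsLowerModularElement {L : Type*} [Lattice L] (x : L) : Prop :=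
  ∀ y z : L, x ≤ y → x ⊔ (y ⊓ z) = y ⊓ (x ⊔ z)

/-- If `a` is an atom and a neutral element of a lattice `L` with least element, then
an element `x ∈ L` is a lowermodular element of `L` if and only if `x ⊔ a` is. -/
theorem isLowerModularElement_sup_atom_iff {L : Type*} [Lattice L] [OrderBot L] (a : L)
    (ha : IsAtom a) (hn : IsNeutralElement a) (x : L) :
    IsLowerModularElement x ↔ IsLowerModularElement (x ⊔ a) := by
  have dist : ∀ y z : L, (a ⊔ y) ⊓ (a ⊔ z) ≤ a ⊔ (y ⊓ z) := by
    intro y z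
    have h1 := hn y (a ⊔ z)
    have h2 := hn y z
    have e1 : (a ⊔ y) ⊓ (a ⊔ z) ≤ (a ⊔ y) ⊓ (y ⊔ (a ⊔ z)) ⊓ ((a ⊔ z) ⊔ a) :=
      le_inf (le_inf inf_le_left (inf_le_right.trans le_sup_right)) (inf_le_right.trans le_sup_left)
    have e2 : y ⊓ (a ⊔ z) ≤ (a ⊔ y) ⊓ (y ⊔ z) ⊓ (z ⊔ a) :=
      le_inf (le_inf (inf_le_left.trans le_sup_right) (inf_le_left.trans le_sup_left))
        (inf_le_right.trans (sup_comm a z).le)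
    rw [h1] at e1
    rw [h2] at e2
    have e3 : y ⊓ (a ⊔ z) ≤ a ⊔ (y ⊓ z) :=
      e2.trans (sup_le (sup_le (inf_le_left.trans le_sup_left) le_sup_right)
        (inf_le_right.trans le_sup_left))
    exact e1.trans (sup_le (sup_le (inf_le_left.trans le_sup_left) e3)
      (inf_le_right.trans le_sup_left))
  have hprime : ∀ y z : L, a ≤ y ⊔ z → a ≤ y ∨ a ≤ z := by
    intro y z h
    by_contra hc
    push Not at hc
    have d1 : a ⊓ y = ⊥ := (ha.not_le_iff_disjoint.1 hc.1).eq_bot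
    have d2 : z ⊓ a = ⊥ := (ha.not_le_iff_disjoint.1 hc.2).symm.eq_bot
    have h2 := hn y z
    have e : a ≤ (a ⊔ y) ⊓ (y ⊔ z) ⊓ (z ⊔ a) := le_inf (le_inf le_sup_left h) le_sup_right
    rw [h2, d1, d2, bot_sup_eq, sup_bot_eq] at e
    exact hc.1 (e.trans inf_le_left)
  have triv : ∀ x y z : L, x ≤ y → x ⊔ (y ⊓ z) ≤ y ⊓ (x ⊔ z) := fun x y z h =>
    sup_le (le_inf h le_sup_left) (le_inf inf_le_left (inf_le_right.trans le_sup_right))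
  constructor
  · intro hx y z hy
    refine le_antisymm (triv _ _ _ hy) ?_
    have h := hx y z (le_sup_left.trans hy)
    have h2 := dist y (x ⊔ z)
    rw [← h] at h2
    calc y ⊓ (x ⊔ a ⊔ z) ≤ (a ⊔ y) ⊓ (a ⊔ (x ⊔ z)) :=
          inf_le_inf le_sup_right (by rw [sup_comm x a, sup_assoc])
      _ ≤ _ := h2
      _ = _ := by rw [← sup_assoc, sup_comm a x]
  · intro hx y z hy
    have hpq := triv x y z hy
    refine le_antisymm hpq ?_
    have h := hx (a ⊔ y) (a ⊔ z) (sup_le (hy.trans le_sup_right) le_sup_left)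
    have hq : y ⊓ (x ⊔ z) ≤ a ⊔ (x ⊔ (y ⊓ z)) := by
      calc y ⊓ (x ⊔ z) ≤ (a ⊔ y) ⊓ (x ⊔ a ⊔ (a ⊔ z)) :=
            inf_le_inf le_sup_right (sup_le_sup le_sup_left le_sup_right)
        _ = _ := h.symm
        _ ≤ x ⊔ a ⊔ (a ⊔ (y ⊓ z)) := sup_le_sup le_rfl (dist y z)
        _ ≤ _ := sup_le (sup_le (le_sup_left.trans le_sup_right) le_sup_left)
            (sup_le_sup le_rfl le_sup_right)
    have hb : y ⊓ (x ⊔ z) ⊓ a ≤ x ⊔ (y ⊓ z) := by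
      by_cases haq : a ≤ y ⊓ (x ⊔ z)
      · refine inf_le_right.trans ?_
        rcases hprime x z (haq.trans inf_le_right) with h | h
        · exact h.trans le_sup_left
        · exact (le_inf (haq.trans inf_le_left) h).trans le_sup_right
      · rw [(ha.not_le_iff_disjoint.1 haq).symm.eq_bot]
        exact bot_le
    have hm := hn (x ⊔ (y ⊓ z)) (y ⊓ (x ⊔ z))
    generalize x ⊔ (y ⊓ z) = p at *
    generalize y ⊓ (x ⊔ z) = q at *
    calc q ≤ (a ⊔ p) ⊓ (p ⊔ q) ⊓ (q ⊔ a) := le_inf (le_inf hq le_sup_right) le_sup_left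
      _ = _ := hm
      _ ≤ p := sup_le (sup_le inf_le_right inf_le_left) hb
end

section
/- Let L be a lattice with a least element ⊥ and let a ∈ L be an atom of L that is also a neutral element of L. Then an element x ∈ L is a standard element of L if and only if x ⊔ a is a standard element of L. -/
def IsStandardElement {L : Type*} [Lattice L] (x : L) : Prop :=
  ∀ y z : L, (x ⊔ y) ⊓ z = (x ⊓ z) ⊔ (y ⊓ z)

/-- If `a` is an atom and a neutral element of a lattice `L` with least element, then
an element `x ∈ L` is a standard element of `L` if and only if `x ⊔ a` is. -/
theorem isStandardElement_sup_atom_iff {L : Type*} [Lattice L] [OrderBot L] (a : L)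
    (ha : IsAtom a) (hn : IsNeutralElement a) (x : L) :
    IsStandardElement x ↔ IsStandardElement (x ⊔ a) := by
  have dich : ∀ y : L, a ≤ y ∨ a ⊓ y = ⊥ := fun y => by
    by_cases h : a ≤ y
    · exact Or.inl h
    · right
      exact ha.2 _ (lt_of_le_of_ne inf_le_left (fun e => h (inf_eq_left.mp e)))
  -- `a` is join prime
  have prime : ∀ y z : L, a ≤ y ⊔ z → a ≤ y ∨ a ≤ z := fun y z h => by
    rcases dich y with h1 | h1
    · exact Or.inl h1
    rcases dich z with h2 | h2
    · exact Or.inr h2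
    left
    have e := hn y z
    rw [h1, inf_comm z a, h2, bot_sup_eq, sup_bot_eq] at e
    have : a ≤ y ⊓ z := by
      rw [← e]
      exact le_inf (le_inf le_sup_left h) le_sup_right
    exact this.trans inf_le_left
  have modl : ∀ y z : L, y ≤ z → (a ⊔ y) ⊓ z ≤ y ⊔ (a ⊓ z) := fun y z h => by
    have e := hn y z
    have h1 : (a ⊔ y) ⊓ z ≤ (a ⊔ y) ⊓ (y ⊔ z) ⊓ (z ⊔ a) :=
      le_inf (le_inf inf_le_left (inf_le_right.trans le_sup_right))
        (inf_le_right.trans le_sup_left)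
    rw [e] at h1
    refine h1.trans (sup_le (sup_le ?_ ?_) ?_)
    · exact inf_le_right.trans le_sup_left
    · exact inf_le_left.trans le_sup_left
    · rw [inf_comm]; exact le_sup_right
  have key : ∀ y z : L, (a ⊔ y) ⊓ z ≤ (a ⊓ y) ⊔ (y ⊓ z) ⊔ (z ⊓ a) := fun y z => by
    rw [← hn y z]
    exact le_inf (le_inf inf_le_left (inf_le_right.trans le_sup_right))
        (inf_le_right.trans le_sup_left)
  have key2 : ∀ y z : L, (a ⊔ y) ⊓ z ≤ a ⊔ (y ⊓ z) := fun y z =>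
    (key y z).trans (sup_le (sup_le (inf_le_left.trans le_sup_left) le_sup_right)
      (inf_le_right.trans le_sup_left))
  have stda : ∀ y z : L, (a ⊔ y) ⊓ z ≤ (a ⊓ z) ⊔ (y ⊓ z) := fun y z => by
    rcases dich y with h | h
    · rw [sup_eq_right.mpr h]; exact le_sup_right
    · have := key y z
      rwa [h, bot_sup_eq, sup_comm (y ⊓ z), inf_comm z a] at this
  constructor
  · intro hx y z
    apply le_antisymm
    · rw [sup_assoc, hx (a ⊔ y) z]
      refine sup_le ?_ ((stda y z).trans (sup_le ?_ le_sup_right))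
      · exact (inf_le_inf_right z le_sup_left).trans le_sup_left
      · exact (inf_le_inf_right z le_sup_right).trans le_sup_left
    · exact sup_le (inf_le_inf_right z le_sup_left) (inf_le_inf_right z le_sup_right)
  · intro hx y z
    have hvu : (x ⊓ z) ⊔ (y ⊓ z) ≤ (x ⊔ y) ⊓ z :=
      sup_le (inf_le_inf_right z le_sup_left) (inf_le_inf_right z le_sup_right)
    refine le_antisymm ?_ hvu
    have h1 : (x ⊔ y) ⊓ z ≤ a ⊔ ((x ⊓ z) ⊔ (y ⊓ z)) := by
      have h2 : (x ⊔ y) ⊓ z ≤ (x ⊔ a ⊔ y) ⊓ z :=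
        inf_le_inf_right z (sup_le_sup_right le_sup_left y)
      rw [hx y z] at h2
      refine h2.trans (sup_le ?_ (le_sup_right.trans le_sup_right))
      rw [sup_comm x a]
      exact (key2 x z).trans (sup_le_sup_left le_sup_left a)
    refine (le_inf h1 le_rfl).trans ((modl _ _ hvu).trans (sup_le le_rfl ?_))
    rcases dich ((x ⊔ y) ⊓ z) with h | h
    · refine inf_le_left.trans ?_
      have hz := h.trans inf_le_right
      rcases prime x y (h.trans inf_le_left) with h3 | h3
      · exact (le_inf h3 hz).trans le_sup_left
      · exact (le_inf h3 hz).trans le_sup_right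
    · rw [h]; exact bot_le
end

section
/- Let L be a lattice with a least element ⊥ and let a ∈ L be an atom of L that is also a neutral element of L. Then an element x ∈ L is a costandard element of L if and only if x ⊔ a is a costandard element of L. -/
def IsCostandardElement {L : Type*} [Lattice L] (x : L) : Prop :=
  ∀ y z : L, (x ⊓ y) ⊔ z = (x ⊔ z) ⊓ (y ⊔ z)

theorem neu_sup {L : Type*} [Lattice L] {a : L} (hn : IsNeutralElement a) (y z : L) :
    (y ⊓ z) ⊔ a = (y ⊔ a) ⊓ (z ⊔ a) := by
  apply le_antisymm
  · exact sup_le (inf_le_inf le_sup_left le_sup_left) (le_inf le_sup_right le_sup_right)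
  · have h1 := hn (y ⊔ z) ((y ⊔ a) ⊓ (z ⊔ a))
    have h2 := hn y z
    set M := (y ⊔ a) ⊓ (z ⊔ a) with hM
    have haM : a ≤ M := le_inf le_sup_right le_sup_right
    have hMw : M ≤ a ⊔ (y ⊔ z) :=
      inf_le_left.trans (sup_le (le_sup_left.trans le_sup_right) le_sup_left)
    have e : M ≤ (a ⊔ (y ⊔ z)) ⊓ ((y ⊔ z) ⊔ M) ⊓ (M ⊔ a) :=
      le_inf (le_inf hMw le_sup_right) le_sup_left
    rw [h1] at e
    have k : (y ⊔ z) ⊓ M ≤ (a ⊔ y) ⊓ (y ⊔ z) ⊓ (z ⊔ a) :=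
      le_inf (le_inf (inf_le_right.trans (inf_le_left.trans (sup_comm y a).le)) inf_le_left)
        (inf_le_right.trans inf_le_right)
    rw [h2] at k
    refine e.trans (sup_le (sup_le (inf_le_left.trans le_sup_right) (k.trans ?_))
      (inf_le_right.trans le_sup_right))
    exact sup_le (sup_le (inf_le_left.trans le_sup_right) le_sup_left)
      (inf_le_right.trans le_sup_right)

theorem neu_inf {L : Type*} [Lattice L] {a : L} (hn : IsNeutralElement a) (y z : L) :
    (y ⊔ z) ⊓ a = (y ⊓ a) ⊔ (z ⊓ a) := by
  have hd : IsNeutralElement (L := Lᵒᵈ) (OrderDual.toDual a) := fun y z =>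
    (hn (OrderDual.ofDual y) (OrderDual.ofDual z)).symm
  exact neu_sup hd (OrderDual.toDual y) (OrderDual.toDual z)

theorem neu_inj {L : Type*} [Lattice L] {a : L} (hn : IsNeutralElement a) {p q : L}
    (h1 : p ⊓ a = q ⊓ a) (h2 : p ⊔ a = q ⊔ a) : p = q := by
  have h := hn p q
  have hp : p ⊔ q ≤ p ⊓ q := by
    have e : p ⊔ q ≤ (a ⊔ p) ⊓ (p ⊔ q) ⊓ (q ⊔ a) := by
      refine le_inf (le_inf ?_ le_rfl) ?_
      · rw [sup_comm a p]; exact sup_le le_sup_left (h2 ▸ le_sup_left)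
      · exact sup_le (h2 ▸ le_sup_left) le_sup_left
    rw [h] at e
    refine e.trans (sup_le (sup_le ?_ le_rfl) ?_)
    · rw [inf_comm a p]; exact le_inf inf_le_left (h1 ▸ inf_le_left)
    · exact le_inf (h1 ▸ inf_le_left) inf_le_left
  exact le_antisymm (le_sup_left.trans (hp.trans inf_le_right))
    (le_sup_right.trans (hp.trans inf_le_left))

theorem neu_key {L : Type*} [Lattice L] [OrderBot L] {a : L}
    (ha : IsAtom a) (hn : IsNeutralElement a) (x : L) :
    IsCostandardElement x ↔
      ∀ y z : L, ((x ⊔ a) ⊓ (y ⊔ a)) ⊔ z = ((x ⊔ a) ⊔ z) ⊓ ((y ⊔ z) ⊔ a) := by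
  have t : ∀ w : L, w ⊓ a = ⊥ ∨ w ⊓ a = a := fun w => ha.le_iff.mp inf_le_right
  have e1 : ∀ y z : L, ((x ⊓ y) ⊔ z) ⊔ a = ((x ⊔ a) ⊓ (y ⊔ a)) ⊔ z := fun y z => by
    rw [← neu_sup hn, sup_right_comm]
  have e2 : ∀ y z : L, ((x ⊔ z) ⊓ (y ⊔ z)) ⊔ a = ((x ⊔ a) ⊔ z) ⊓ ((y ⊔ z) ⊔ a) := fun y z => by
    rw [neu_sup hn, sup_right_comm x z a]
  constructor
  · intro h y z
    rw [← e1, ← e2, h y z]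
  · intro h y z
    apply neu_inj hn
    · rw [neu_inf hn, inf_inf_distrib_right x y a, inf_inf_distrib_right (x ⊔ z) (y ⊔ z) a,
        neu_inf hn, neu_inf hn]
      rcases t x with hx | hx <;> rcases t y with hy | hy <;> rcases t z with hz | hz <;>
        simp [hx, hy, hz]
    · rw [e1, e2, h]

/-- If `a` is an atom and a neutral element of a lattice `L` with least element, then
an element `x ∈ L` is a costandard element of `L` if and only if `x ⊔ a` is. -/
theorem isCostandardElement_sup_atom_iff {L : Type*} [Lattice L] [OrderBot L] (a : L)
    (ha : IsAtom a) (hn : IsNeutralElement a) (x : L) :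
    IsCostandardElement x ↔ IsCostandardElement (x ⊔ a) := by
  rw [neu_key ha hn, neu_key ha hn]
  simp only [sup_assoc, sup_idem]
end

section
/- Let L be a lattice with a least element ⊥ and let a ∈ L be an atom of L that is also a neutral element of L. Then an element x ∈ L is a neutral element of L if and only if x ⊔ a is a neutral element of L. -/
/-- If `a` is an atom and a neutral element of a lattice `L` with least element, then
an element `x ∈ L` is a neutral element of `L` if and only if `x ⊔ a` is. -/
theorem isNeutralElement_sup_atom_iff {L : Type*} [Lattice L] [OrderBot L] (a : L)
    (ha : IsAtom a) (hn : IsNeutralElement a) (x : L) :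
    IsNeutralElement x ↔ IsNeutralElement (x ⊔ a) := by
  have D := neutral_sup_inf hn
  have D' := neutral_inf_sup hn
  have s3 : a ⊔ x ⊔ (a ⊔ a) = a ⊔ x := by
    rw [sup_idem]; exact sup_eq_left.2 le_sup_left
  have i2 : ∀ y z, a ⊓ (y ⊓ z) = (a ⊓ y) ⊓ (a ⊓ z) := fun y z => inf_inf_distrib_left _ _ _
  have j2 : ∀ y z, a ⊔ (y ⊔ z) = (a ⊔ y) ⊔ (a ⊔ z) := fun y z => sup_sup_distrib_left _ _ _
  constructor
  · intro h y z
    apply neutral_cancel hn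
    · have := congrArg (a ⊔ ·) (h y z)
      simp only [D, j2] at this ⊢
      simp only [s3] at this ⊢
      exact this
    · have e : a ⊓ x ⊔ a = a := sup_eq_right.2 inf_le_left
      simp only [i2, D', inf_idem]
      apply le_antisymm
      · refine inf_le_left.trans (inf_le_right.trans (sup_le ?_ ?_))
        · refine le_sup_of_le_left (le_sup_of_le_left (le_inf ?_ le_rfl))
          exact inf_le_left.trans le_sup_right
        · refine le_sup_of_le_right (le_inf le_rfl ?_)
          exact inf_le_left.trans le_sup_right
      · rw [e, inf_eq_right.2 (inf_le_left : a ⊓ y ≤ a),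
          inf_eq_left.2 (inf_le_left : a ⊓ z ≤ a)]
        have hb : (a ⊓ y) ⊓ (a ⊓ z) ≤ a ⊓ y := inf_le_left
        rw [sup_eq_left.2 hb, sup_eq_left.2 (inf_le_left : a ⊓ y ≤ a),
          sup_eq_right.2 (inf_le_left : a ⊓ z ≤ a)]
        exact le_inf (le_inf (sup_le inf_le_left inf_le_left) le_rfl)
          (sup_le inf_le_left inf_le_left)
  · intro h
    by_cases hx : a ≤ x
    · rwa [sup_eq_left.2 hx] at h
    have hb : a ⊓ x = ⊥ := by
      rcases ha.le_iff.1 (inf_le_left : a ⊓ x ≤ a) with h | h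
      · exact h
      · exact absurd (inf_eq_left.1 h) hx
    intro y z
    apply neutral_cancel hn
    · have := congrArg (a ⊔ ·) (h y z)
      simp only [D, j2] at this ⊢
      simp only [s3] at this ⊢
      exact this
    · simp only [i2, D', hb, bot_sup_eq, sup_bot_eq, bot_inf_eq, inf_bot_eq]
      rw [inf_eq_left.2 (le_sup_left : a ⊓ y ≤ a ⊓ y ⊔ a ⊓ z)]
end

section
/- Let G be a group acting on a set A such that the action is not transitive and the stabilizers of any two points of A coincide (for all x, y ∈ A, Stab(x) = Stab(y)). Then a congruence α on the G-set A is a distributive element of the congruence lattice Con(A) if and only if α is the equality relation or the universal relation on A. -/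
def IsDistributiveElement {L : Type*} [Lattice L] (x : L) : Prop :=
  ∀ y z : L, x ⊔ (y ⊓ z) = (x ⊔ y) ⊓ (x ⊔ z)

/-- The congruence lattice `Con(A)` of a `G`-set `A`: the sublattice of the lattice
`Setoid A` of all equivalence relations on `A` (where meet is intersection and join is
the transitive closure of the union) consisting of the equivalence relations compatible
with the action of `G`. -/
def gSetCongruences (G A : Type*) [Group G] [MulAction G A] : Sublattice (Setoid A) where
  carrier := {r : Setoid A | ∀ (g : G) (x y : A), r x y → r (g • x) (g • y)}
  supClosed' := by
    intro r hr s hs g x y hxy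
    rw [Setoid.sup_eq_eqvGen] at hxy ⊢
    induction hxy with
    | rel a b h => exact Relation.EqvGen.rel _ _ (h.imp (hr g a b) (hs g a b))
    | refl a => exact Relation.EqvGen.refl _
    | symm a b _ ih => exact Relation.EqvGen.symm _ _ ih
    | trans a b c _ _ ih1 ih2 => exact Relation.EqvGen.trans _ _ _ ih1 ih2
  infClosed' := by
    intro r hr s hs g x y hxy
    exact ⟨hr g x y hxy.1, hs g x y hxy.2⟩

theorem gset_key {G A : Type*} [Group G] [MulAction G A]
    (hstab : ∀ x y : A, MulAction.stabilizer G x = MulAction.stabilizer G y)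
    {g k : G} {x : A} (y : A) (h : g • x = k • x) : g • y = k • y := by
  have h1 : k⁻¹ * g ∈ MulAction.stabilizer G x := by
    rw [MulAction.mem_stabilizer_iff, mul_smul, h, inv_smul_smul]
  rw [hstab x y, MulAction.mem_stabilizer_iff, mul_smul, inv_smul_eq_iff] at h1
  exact h1

/-- The congruence generated by a pair of points in different orbits. -/
def gsetPair {G A : Type*} [Group G] [MulAction G A]
    (hstab : ∀ x y : A, MulAction.stabilizer G x = MulAction.stabilizer G y)
    (a c : A) (hac : ∀ g : G, g • a ≠ c) : gSetCongruences G A :=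
  ⟨{ r := fun x y => x = y ∨ ∃ g : G, (x = g • a ∧ y = g • c) ∨ (x = g • c ∧ y = g • a)
     iseqv := by
      have hne : ∀ g k : G, g • a ≠ k • c := by
        intro g k h
        apply hac (k⁻¹ * g)
        rw [mul_smul, h, inv_smul_smul]
      refine ⟨fun x => Or.inl rfl, ?_, ?_⟩
      · rintro x y (h | ⟨g, h | h⟩)
        · exact Or.inl h.symm
        · exact Or.inr ⟨g, Or.inr ⟨h.2, h.1⟩⟩
        · exact Or.inr ⟨g, Or.inl ⟨h.2, h.1⟩⟩
      · rintro x y z (rfl | ⟨g, ⟨rfl, rfl⟩ | ⟨rfl, rfl⟩⟩) (rfl | ⟨k, ⟨h1, rfl⟩ | ⟨h1, rfl⟩⟩)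
        · exact Or.inl rfl
        · exact Or.inr ⟨k, Or.inl ⟨h1, rfl⟩⟩
        · exact Or.inr ⟨k, Or.inr ⟨h1, rfl⟩⟩
        · exact Or.inr ⟨g, Or.inl ⟨rfl, rfl⟩⟩
        · exact absurd h1.symm (hne _ _)
        · exact Or.inl (gset_key hstab a h1)
        · exact Or.inr ⟨g, Or.inr ⟨rfl, rfl⟩⟩
        · exact Or.inl (gset_key hstab c h1)
        · exact absurd h1 (hne _ _) }, by
    rintro k x y (h | ⟨g, ⟨h1, h2⟩ | ⟨h1, h2⟩⟩)
    · exact Or.inl (by rw [h])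
    · exact Or.inr ⟨k * g, Or.inl ⟨by rw [h1, mul_smul], by rw [h2, mul_smul]⟩⟩
    · exact Or.inr ⟨k * g, Or.inr ⟨by rw [h1, mul_smul], by rw [h2, mul_smul]⟩⟩⟩

/-- The orbit congruence. -/
def gsetOrb (G A : Type*) [Group G] [MulAction G A] : gSetCongruences G A :=
  ⟨MulAction.orbitRel G A, by
    rintro k x y ⟨g, h⟩
    refine ⟨k * g * k⁻¹, ?_⟩
    simp only [mul_smul, inv_smul_smul] at h ⊢
    rw [h]⟩

theorem gset_use {G A : Type*} [Group G] [MulAction G A] {α : gSetCongruences G A}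
    (hα : IsDistributiveElement α) (β γ : gSetCongruences G A)
    (h0 : ∀ x y, β.1 x y → γ.1 x y → x = y) {x y : A}
    (h1 : (α.1 ⊔ β.1) x y) (h2 : (α.1 ⊔ γ.1) x y) : α.1 x y := by
  have h3 : α.1 ⊔ (β.1 ⊓ γ.1) = (α.1 ⊔ β.1) ⊓ (α.1 ⊔ γ.1) := congrArg Subtype.val (hα β γ)
  have h4 : β.1 ⊓ γ.1 ≤ α.1 := by
    intro x y h
    rw [h0 x y h.1 h.2]
  rw [sup_eq_left.2 h4] at h3
  rw [h3]
  exact ⟨h1, h2⟩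

/-- Let `G` be a group acting non-transitively on a set `A` such that the stabilizers of
any two points of `A` coincide. A congruence `α` on the `G`-set `A` is a distributive
element of the congruence lattice `Con(A)` if and only if `α` is the equality relation
(`⊥`) or the universal relation (`⊤`) on `A`. -/
theorem gSetCongruence_isDistributiveElement_iff (G A : Type*) [Group G] [MulAction G A]
    (hnt : ¬ ∀ a b : A, ∃ g : G, g • a = b)
    (hstab : ∀ x y : A, MulAction.stabilizer G x = MulAction.stabilizer G y)
    (α : gSetCongruences G A) :
    IsDistributiveElement α ↔ ((α : Setoid A) = ⊥ ∨ (α : Setoid A) = ⊤) := by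
  have hl : ∀ (r s : Setoid A) {x y : A}, r x y → (r ⊔ s) x y := fun r s x y h =>
    (le_sup_left : r ≤ r ⊔ s) h
  have hr : ∀ (r s : Setoid A) {x y : A}, s x y → (r ⊔ s) x y := fun r s x y h =>
    (le_sup_right : s ≤ r ⊔ s) h
  constructor
  · intro hα
    by_cases hbot : α.1 = ⊥
    · exact Or.inl hbot
    right
    have X : ∀ a b : A, α.1 a b → (∀ g : G, g • a ≠ b) → ∀ h : G, α.1 a (h • a) := by
      intro a b hab hne h
      have hne' : ∀ g : G, g • a ≠ h • b := by
        intro g hg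
        apply hne (h⁻¹ * g)
        rw [mul_smul, hg, inv_smul_smul]
      refine gset_use hα (gsetPair hstab a (h • b) hne') (gsetOrb G A) ?_ ?_ ?_
      · rintro x y (e | ⟨g, ⟨rfl, rfl⟩ | ⟨rfl, rfl⟩⟩) ⟨k, hk⟩
        · exact e
        · exfalso
          apply hne' (g⁻¹ * (k⁻¹ * g))
          simp only [mul_smul] at hk ⊢
          rw [← hk]; simp
        · exfalso
          apply hne' (g⁻¹ * (k * g))
          simp only [mul_smul] at hk ⊢
          rw [hk]; simp
      · refine Setoid.trans' _ (y := h • b) (hr _ _ ?_) (hl _ _ (α.2 h _ _ (Setoid.symm' _ hab)))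
        exact Or.inr ⟨1, Or.inl ⟨by simp, by simp⟩⟩
      · exact hr _ _ ⟨h⁻¹, by simp⟩
    have Y : ∀ a b c : A, α.1 a b → a ≠ b → (∀ g : G, g • a ≠ c) → (∀ g : G, g • b ≠ c) →
        α.1 a c := by
      intro a b c hab hne hac hbc
      have hac' : ∀ g k : G, g • a ≠ k • c := by
        intro g k h
        apply hac (k⁻¹ * g)
        rw [mul_smul, h, inv_smul_smul]
      refine gset_use hα (gsetPair hstab a c hac) (gsetPair hstab b c hbc) ?_ ?_ ?_
      · have fin : ∀ g k : G, g • a = k • b → g • c = k • c → False := by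
          intro g k h1 h2
          have h3 := gset_key hstab b h2
          rw [← h3] at h1
          exact hne (smul_left_cancel g h1)
        rintro x y (e | ⟨g, ⟨rfl, rfl⟩ | ⟨rfl, rfl⟩⟩) (e' | ⟨k, ⟨h1, h2⟩ | ⟨h1, h2⟩⟩)
        · exact e
        · exact e
        · exact e
        · exact e'
        · exact (fin _ _ h1 h2).elim
        · exact absurd h1 (hac' _ _)
        · exact e'
        · exact absurd h2 (hac' _ _)
        · exact (fin _ _ h2 h1).elim
      · exact hr _ _ (Or.inr ⟨1, Or.inl ⟨by simp, by simp⟩⟩)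
      · refine Setoid.trans' _ (y := b) (hl _ _ hab) (hr _ _ ?_)
        exact Or.inr ⟨1, Or.inl ⟨by simp, by simp⟩⟩
    obtain ⟨a, b, hab, hne⟩ : ∃ a b : A, α.1 a b ∧ a ≠ b := by
      by_contra! hcon
      apply hbot
      ext x y
      exact ⟨fun h => hcon x y h, fun h => by
        have h' : x = y := h
        rw [h']⟩
    have orb : ∀ a : A, ∃ d : A, ∀ g : G, g • a ≠ d := by
      intro a
      by_contra! hcon
      apply hnt
      intro x y
      obtain ⟨g, rfl⟩ := hcon x
      obtain ⟨k, rfl⟩ := hcon y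
      exact ⟨k * g⁻¹, by simp [mul_smul]⟩
    have all : ∀ c, α.1 a c := by
      intro c
      by_cases hac : ∃ g : G, g • a = c
      · obtain ⟨h, rfl⟩ := hac
        by_cases hb : ∃ g : G, g • a = b
        · obtain ⟨k, rfl⟩ := hb
          obtain ⟨d, hd⟩ := orb a
          refine X a d (Y a (k • a) d hab hne hd ?_) hd h
          intro g
          rw [← mul_smul]
          exact hd _
        · exact X a b hab (not_exists.1 hb) h
      · by_cases hbc : ∃ g : G, g • b = c
        · obtain ⟨h, rfl⟩ := hbc
          refine Setoid.trans' _ hab (X b a (Setoid.symm' _ hab) ?_ h)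
          rintro g rfl
          exact hac ⟨h * g⁻¹, by simp [mul_smul]⟩
        · exact Y a b c hab hne (not_exists.1 hac) (not_exists.1 hbc)
    exact eq_top_iff.2 fun x y _ => Setoid.trans' _ (Setoid.symm' _ (all x)) (all y)
  · rintro (h | h) β γ
    · apply Subtype.ext
      change α.1 ⊔ (β.1 ⊓ γ.1) = (α.1 ⊔ β.1) ⊓ (α.1 ⊔ γ.1)
      rw [h]; simp
    · apply Subtype.ext
      change α.1 ⊔ (β.1 ⊓ γ.1) = (α.1 ⊔ β.1) ⊓ (α.1 ⊔ γ.1)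
      rw [h]; simp
end

section
/- Let G be a group acting on a set A such that the action is not transitive and the stabilizers of any two points of A coincide (for all x, y ∈ A, Stab(x) = Stab(y)). Then a congruence α on the G-set A is a codistributive element of the congruence lattice Con(A) if and only if α is the equality relation or the universal relation on A. -/
/-- The congruence generated by a pair of points in different orbits. -/
def pairCong {G A : Type*} [Group G] [MulAction G A]
    (hstab : ∀ x y : A, MulAction.stabilizer G x = MulAction.stabilizer G y)
    (x y : A) (hxy : ∀ g : G, g • x ≠ y) : Setoid A where
  r u v := u = v ∨ ∃ g : G, (u = g • x ∧ v = g • y) ∨ (u = g • y ∧ v = g • x)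
  iseqv := by
    have key : ∀ (u v : A) (g h : G), g • u = h • u → g • v = h • v := by
      intro u v g h e
      have h1 : h⁻¹ * g ∈ MulAction.stabilizer G u := by
        rw [MulAction.mem_stabilizer_iff, mul_smul, e, inv_smul_smul]
      rw [hstab u v, MulAction.mem_stabilizer_iff, mul_smul, inv_smul_eq_iff] at h1
      exact h1
    have ne : ∀ g h : G, g • x ≠ h • y := by
      intro g h e
      apply hxy (h⁻¹ * g)
      rw [mul_smul, e, inv_smul_smul]
    refine ⟨fun u => Or.inl rfl, ?_, ?_⟩
    · rintro u v (rfl | ⟨g, h | h⟩)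
      · exact Or.inl rfl
      · exact Or.inr ⟨g, Or.inr ⟨h.2, h.1⟩⟩
      · exact Or.inr ⟨g, Or.inl ⟨h.2, h.1⟩⟩
    · rintro u v w (rfl | ⟨g, ⟨rfl, rfl⟩ | ⟨rfl, rfl⟩⟩) (rfl | ⟨g', ⟨h1, rfl⟩ | ⟨h1, rfl⟩⟩)
      · exact Or.inl rfl
      · exact Or.inr ⟨g', Or.inl ⟨h1, rfl⟩⟩
      · exact Or.inr ⟨g', Or.inr ⟨h1, rfl⟩⟩
      · exact Or.inr ⟨g, Or.inl ⟨rfl, rfl⟩⟩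
      · exact absurd h1.symm (ne _ _)
      · exact Or.inl (key _ _ _ _ h1)
      · exact Or.inr ⟨g, Or.inr ⟨rfl, rfl⟩⟩
      · exact Or.inl (key _ _ _ _ h1)
      · exact absurd h1 (ne _ _)

theorem pairCong_mem {G A : Type*} [Group G] [MulAction G A]
    (hstab : ∀ x y : A, MulAction.stabilizer G x = MulAction.stabilizer G y)
    (x y : A) (hxy : ∀ g : G, g • x ≠ y) : pairCong hstab x y hxy ∈ gSetCongruences G A := by
  rintro k u v (rfl | ⟨g, ⟨rfl, rfl⟩ | ⟨rfl, rfl⟩⟩)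
  · exact Or.inl rfl
  · exact Or.inr ⟨k * g, Or.inl ⟨(mul_smul _ _ _).symm, (mul_smul _ _ _).symm⟩⟩
  · exact Or.inr ⟨k * g, Or.inr ⟨(mul_smul _ _ _).symm, (mul_smul _ _ _).symm⟩⟩

theorem pairCong_rel {G A : Type*} [Group G] [MulAction G A]
    (hstab : ∀ x y : A, MulAction.stabilizer G x = MulAction.stabilizer G y)
    (x y : A) (hxy : ∀ g : G, g • x ≠ y) : pairCong hstab x y hxy x y :=
  Or.inr ⟨1, Or.inl ⟨(one_smul _ _).symm, (one_smul _ _).symm⟩⟩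

theorem inf_pairCong {G A : Type*} [Group G] [MulAction G A]
    (hstab : ∀ x y : A, MulAction.stabilizer G x = MulAction.stabilizer G y)
    (x y : A) (hxy : ∀ g : G, g • x ≠ y) (r : Setoid A) (hr : r ∈ gSetCongruences G A)
    (hn : ¬ r x y) : r ⊓ pairCong hstab x y hxy = ⊥ := by
  rw [eq_bot_iff]
  rintro u v ⟨h1, (rfl | ⟨g, ⟨rfl, rfl⟩ | ⟨rfl, rfl⟩⟩)⟩
  · rfl
  · have := hr g⁻¹ _ _ h1
    rw [inv_smul_smul, inv_smul_smul] at this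
    exact absurd this hn
  · have := hr g⁻¹ _ _ h1
    rw [inv_smul_smul, inv_smul_smul] at this
    exact absurd (r.symm' this) hn

theorem orbitRel_mem {G A : Type*} [Group G] [MulAction G A] :
    MulAction.orbitRel G A ∈ gSetCongruences G A := by
  rintro k u v ⟨g, rfl⟩
  exact ⟨k * g * k⁻¹, by simp [mul_smul]⟩

theorem codist_rel {G A : Type*} [Group G] [MulAction G A]
    (α : gSetCongruences G A) (h : IsCodistributiveElement α) (y z : Setoid A)
    (hy : y ∈ gSetCongruences G A) (hz : z ∈ gSetCongruences G A) (a c b : A)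
    (hab : (α : Setoid A) a b) (h1 : y a c) (h2 : z c b) :
    (((α : Setoid A) ⊓ y) ⊔ ((α : Setoid A) ⊓ z)) a b := by
  have e : (α : Setoid A) ⊓ (y ⊔ z) = ((α : Setoid A) ⊓ y) ⊔ ((α : Setoid A) ⊓ z) :=
    congrArg Subtype.val (h ⟨y, hy⟩ ⟨z, hz⟩)
  rw [← e]
  have hyy : y ≤ y ⊔ z := le_sup_left
  have hzz : z ≤ y ⊔ z := le_sup_right
  exact ⟨hab, (y ⊔ z).trans' (hyy h1) (hzz h2)⟩

theorem codist_third {G A : Type*} [Group G] [MulAction G A]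
    (hstab : ∀ x y : A, MulAction.stabilizer G x = MulAction.stabilizer G y)
    (α : gSetCongruences G A) (h : IsCodistributiveElement α) (a b c : A)
    (hab : (α : Setoid A) a b) (hne : a ≠ b) (hca : ∀ g : G, g • a ≠ c)
    (hcb : ∀ g : G, g • c ≠ b) : (α : Setoid A) a c := by
  by_contra hac
  have hbc : ¬ (α : Setoid A) c b := fun hh =>
    hac ((α : Setoid A).trans' hab ((α : Setoid A).symm' hh))
  have := codist_rel α h _ _ (pairCong_mem hstab a c hca) (pairCong_mem hstab c b hcb) a c b hab
    (pairCong_rel _ _ _ _) (pairCong_rel _ _ _ _)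
  rw [inf_pairCong _ _ _ _ _ α.2 hac, inf_pairCong _ _ _ _ _ α.2 hbc, sup_idem] at this
  exact hne this

theorem codist_orbit {G A : Type*} [Group G] [MulAction G A]
    (hstab : ∀ x y : A, MulAction.stabilizer G x = MulAction.stabilizer G y)
    (α : gSetCongruences G A) (h : IsCodistributiveElement α) (a b : A)
    (hab : (α : Setoid A) a b) (hor : ∀ g : G, g • a ≠ b) (g : G) :
    (α : Setoid A) a (g • a) := by
  by_contra hn
  have hn' : ¬ (α : Setoid A) a (g • b) := fun hh =>
    hn ((α : Setoid A).trans' hh ((α : Setoid A).symm' (α.2 g _ _ hab)))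
  have hor' : ∀ k : G, k • a ≠ g • b := by
    intro k e
    apply hor (g⁻¹ * k)
    rw [mul_smul, e, inv_smul_smul]
  have := codist_rel α h _ _ (pairCong_mem hstab a (g • b) hor') orbitRel_mem a (g • b) b hab
    (pairCong_rel _ _ _ _) ⟨g, rfl⟩
  rw [inf_pairCong _ _ _ _ _ α.2 hn', bot_sup_eq] at this
  obtain ⟨k, hk⟩ := (MulAction.orbitRel G A).symm' this.2
  exact hor k hk

/-- Let `G` be a group acting non-transitively on a set `A` such that the stabilizers of
any two points of `A` coincide. A congruence `α` on the `G`-set `A` is a codistributive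
element of the congruence lattice `Con(A)` if and only if `α` is the equality relation
(`⊥`) or the universal relation (`⊤`) on `A`. -/
theorem gSetCongruence_isCodistributiveElement_iff (G A : Type*) [Group G] [MulAction G A]
    (hnt : ¬ ∀ a b : A, ∃ g : G, g • a = b)
    (hstab : ∀ x y : A, MulAction.stabilizer G x = MulAction.stabilizer G y)
    (α : gSetCongruences G A) :
    IsCodistributiveElement α ↔ ((α : Setoid A) = ⊥ ∨ (α : Setoid A) = ⊤) := by
  constructor
  · intro h
    by_cases hbot : (α : Setoid A) = ⊥
    · exact Or.inl hbot
    right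
    -- a nontrivial related pair
    obtain ⟨a, b, hab, hne⟩ : ∃ a b : A, (α : Setoid A) a b ∧ a ≠ b := by
      by_contra hcon
      push Not at hcon
      apply hbot
      rw [eq_bot_iff]
      intro u v huv
      exact hcon u v huv
    -- a related pair in different orbits
    obtain ⟨a, b, hab, hor⟩ : ∃ a b : A, (α : Setoid A) a b ∧ ∀ g : G, g • a ≠ b := by
      by_cases ho : ∃ g : G, g • a = b
      · obtain ⟨g, rfl⟩ := ho
        obtain ⟨c, hc⟩ : ∃ c : A, ∀ k : G, k • a ≠ c := by
          by_contra hcon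
          push Not at hcon
          apply hnt
          intro u v
          obtain ⟨k, rfl⟩ := hcon u
          obtain ⟨l, rfl⟩ := hcon v
          exact ⟨l * k⁻¹, by simp [mul_smul]⟩
        refine ⟨a, c, codist_third hstab α h a (g • a) c hab hne hc ?_, hc⟩
        intro k e
        apply hc (k⁻¹ * g)
        rw [mul_smul, ← e, inv_smul_smul]
      · push Not at ho
        exact ⟨a, b, hab, ho⟩
    have hor' : ∀ g : G, g • b ≠ a := by
      intro g e
      apply hor g⁻¹
      rw [← e, inv_smul_smul]
    have all : ∀ c : A, (α : Setoid A) a c := by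
      intro c
      by_cases h1 : ∃ g : G, g • a = c
      · obtain ⟨g, rfl⟩ := h1
        exact codist_orbit hstab α h a b hab hor g
      by_cases h2 : ∃ g : G, g • b = c
      · obtain ⟨g, rfl⟩ := h2
        exact (α : Setoid A).trans' hab
          (codist_orbit hstab α h b a ((α : Setoid A).symm' hab) hor' g)
      push Not at h1 h2
      refine codist_third hstab α h a b c hab ?_ h1 ?_
      · intro e
        exact hor 1 (by rw [one_smul, e])
      · intro g e
        apply h2 g⁻¹
        rw [← e, inv_smul_smul]
    rw [eq_top_iff]
    intro u v _
    exact (α : Setoid A).trans' ((α : Setoid A).symm' (all u)) (all v)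
  · rintro (h | h) y z
    · apply Subtype.ext
      change (α : Setoid A) ⊓ ((y : Setoid A) ⊔ z) = ((α : Setoid A) ⊓ y) ⊔ ((α : Setoid A) ⊓ z)
      simp [h]
    · apply Subtype.ext
      change (α : Setoid A) ⊓ ((y : Setoid A) ⊔ z) = ((α : Setoid A) ⊓ y) ⊔ ((α : Setoid A) ⊓ z)
      simp [h]
end

section
/- Let G be a group acting on a set A such that the action is not transitive and the stabilizers of any two points of A coincide (for all x, y ∈ A, Stab(x) = Stab(y)). Then a congruence α on the G-set A is a standard element of the congruence lattice Con(A) if and only if α is the equality relation or the universal relation on A. -/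
theorem aux_smul_eq {G A : Type*} [Group G] [MulAction G A]
    (hstab : ∀ x y : A, MulAction.stabilizer G x = MulAction.stabilizer G y)
    (x y : A) (g h : G) (e : g • x = h • x) : g • y = h • y := by
  have h1 : h⁻¹ * g ∈ MulAction.stabilizer G x := by
    rw [MulAction.mem_stabilizer_iff, mul_smul, e, inv_smul_smul]
  rw [hstab x y, MulAction.mem_stabilizer_iff, mul_smul, inv_smul_eq_iff] at h1
  exact h1

theorem aux_orb {G A : Type*} [Group G] [MulAction G A] {a b : A}
    (hab : ∀ g : G, g • a ≠ b) (g h : G) : g • a ≠ h • b := by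
  intro e
  apply hab (h⁻¹ * g)
  rw [mul_smul, e, inv_smul_smul]

def auxTheta {G A : Type*} [Group G] [MulAction G A]
    (hstab : ∀ x y : A, MulAction.stabilizer G x = MulAction.stabilizer G y)
    (a b : A) (hab : ∀ g : G, g • a ≠ b) : Setoid A where
  r x y := x = y ∨ ∃ g : G, (x = g • a ∧ y = g • b) ∨ (x = g • b ∧ y = g • a)
  iseqv := by
    refine ⟨fun x => Or.inl rfl, ?_, ?_⟩
    · rintro x y (h | ⟨g, h | h⟩)
      · exact Or.inl h.symm
      · exact Or.inr ⟨g, Or.inr ⟨h.2, h.1⟩⟩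
      · exact Or.inr ⟨g, Or.inl ⟨h.2, h.1⟩⟩
    · rintro x y z (rfl | ⟨g, h⟩) h2
      · exact h2
      rcases h2 with rfl | ⟨k, h2⟩
      · exact Or.inr ⟨g, h⟩
      left
      rcases h with ⟨rfl, rfl⟩ | ⟨rfl, rfl⟩ <;> rcases h2 with ⟨e, rfl⟩ | ⟨e, rfl⟩
      · exact absurd e.symm (aux_orb hab _ _)
      · exact aux_smul_eq hstab _ _ _ _ e
      · exact aux_smul_eq hstab _ _ _ _ e
      · exact absurd e (aux_orb hab _ _)

theorem auxTheta_mem {G A : Type*} [Group G] [MulAction G A]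
    (hstab : ∀ x y : A, MulAction.stabilizer G x = MulAction.stabilizer G y)
    (a b : A) (hab : ∀ g : G, g • a ≠ b) : auxTheta hstab a b hab ∈ gSetCongruences G A := by
  rintro g x y (rfl | ⟨k, ⟨rfl, rfl⟩ | ⟨rfl, rfl⟩⟩)
  · exact Or.inl rfl
  · exact Or.inr ⟨g * k, Or.inl ⟨smul_smul _ _ _, smul_smul _ _ _⟩⟩
  · exact Or.inr ⟨g * k, Or.inr ⟨smul_smul _ _ _, smul_smul _ _ _⟩⟩

theorem auxTheta_self {G A : Type*} [Group G] [MulAction G A]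
    (hstab : ∀ x y : A, MulAction.stabilizer G x = MulAction.stabilizer G y)
    (a b : A) (hab : ∀ g : G, g • a ≠ b) : auxTheta hstab a b hab a b :=
  Or.inr ⟨1, Or.inl ⟨(one_smul _ _).symm, (one_smul _ _).symm⟩⟩

/-- If the meets are such that `y ⊓ z = ⊥` then the standardness reflects. -/
theorem aux_step {G A : Type*} [Group G] [MulAction G A] (α : gSetCongruences G A)
    (H : IsStandardElement α) (y z : Setoid A) (hy : y ∈ gSetCongruences G A)
    (hz : z ∈ gSetCongruences G A) (hyz : ∀ u v, y u v → z u v → u = v)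
    (p q r : A) (h1 : (α : Setoid A) p q) (h2 : y q r) (h3 : z p r) : (α : Setoid A) p r := by
  have e := congrArg Subtype.val (H ⟨y, hy⟩ ⟨z, hz⟩)
  have e' : ((α : Setoid A) ⊔ y) ⊓ z = ((α : Setoid A) ⊓ z) ⊔ (y ⊓ z) := e
  have hb : y ⊓ z = ⊥ := by
    rw [eq_bot_iff]
    intro u v h
    exact hyz u v h.1 h.2
  rw [hb, sup_bot_eq] at e'
  have : (((α : Setoid A) ⊔ y) ⊓ z) p r := by
    refine ⟨?_, h3⟩
    have l1 : (α : Setoid A) ≤ (α : Setoid A) ⊔ y := le_sup_left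
    have l2 : y ≤ (α : Setoid A) ⊔ y := le_sup_right
    exact Setoid.trans' _ (l1 h1) (l2 h2)
  rw [e'] at this
  exact this.1

theorem aux_third {G A : Type*} [Group G] [MulAction G A]
    (hstab : ∀ x y : A, MulAction.stabilizer G x = MulAction.stabilizer G y)
    (α : gSetCongruences G A) (H : IsStandardElement α) (c d e : A)
    (h : (α : Setoid A) c d) (hcd : c ≠ d) (hc : ∀ g : G, g • c ≠ e) (hd : ∀ g : G, g • d ≠ e) :
    (α : Setoid A) c e := by
  refine aux_step α H (auxTheta hstab d e hd) (auxTheta hstab c e hc) (auxTheta_mem _ _ _ _)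
    (auxTheta_mem _ _ _ _) ?_ c d e h (auxTheta_self _ _ _ _) (auxTheta_self _ _ _ _)
  have key : ∀ g k : G, g • d = k • c → g • e = k • e → False := by
    intro g k h1 h2
    have := aux_smul_eq hstab e d _ _ h2
    rw [this] at h1
    exact hcd (MulAction.injective k h1).symm
  rintro u v (h1 | ⟨g, ⟨rfl, rfl⟩ | ⟨rfl, rfl⟩⟩) (h2 | ⟨k, ⟨e1, e2⟩ | ⟨e1, e2⟩⟩)
  all_goals first | exact h1 | exact h2 | skip
  · exact (key _ _ e1 e2).elim
  · exact absurd e1 (aux_orb hd _ _)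
  · exact absurd e2 (aux_orb hd _ _)
  · exact (key _ _ e2 e1).elim

theorem aux_case1 {G A : Type*} [Group G] [MulAction G A]
    (hnt : ¬ ∀ a b : A, ∃ g : G, g • a = b)
    (hstab : ∀ x y : A, MulAction.stabilizer G x = MulAction.stabilizer G y)
    (α : gSetCongruences G A) (H : IsStandardElement α) (c : A) (g : G)
    (h : (α : Setoid A) c (g • c)) (hcd : c ≠ g • c) : (α : Setoid A) = ⊤ := by
  have out : ∀ e, (∀ k : G, k • c ≠ e) → (α : Setoid A) c e := by
    intro e he
    refine aux_third hstab α H c _ e h hcd he ?_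
    intro k
    rw [smul_smul]
    exact he _
  obtain ⟨e, he⟩ : ∃ e, ∀ k : G, k • c ≠ e := by
    by_contra hcon
    push Not at hcon
    apply hnt
    intro a b
    obtain ⟨k, rfl⟩ := hcon a
    obtain ⟨l, rfl⟩ := hcon b
    exact ⟨l * k⁻¹, by rw [smul_smul, inv_mul_cancel_right]⟩
  have all : ∀ f, (α : Setoid A) c f := by
    intro f
    by_cases hf : ∀ k : G, k • c ≠ f
    · exact out f hf
    push Not at hf
    obtain ⟨k, rfl⟩ := hf
    have h1 := out (k⁻¹ • e) (fun l => aux_orb he l _)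
    have h2 := α.2 k _ _ h1
    rw [smul_inv_smul] at h2
    exact Setoid.trans' _ (out e he) (Setoid.symm' _ h2)
  rw [eq_top_iff]
  intro u v _
  exact Setoid.trans' _ (Setoid.symm' _ (all u)) (all v)

/-- Let `G` be a group acting non-transitively on a set `A` such that the stabilizers of
any two points of `A` coincide. A congruence `α` on the `G`-set `A` is a standard
element of the congruence lattice `Con(A)` if and only if `α` is the equality relation
(`⊥`) or the universal relation (`⊤`) on `A`. -/
theorem gSetCongruence_isStandardElement_iff (G A : Type*) [Group G] [MulAction G A]
    (hnt : ¬ ∀ a b : A, ∃ g : G, g • a = b)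
    (hstab : ∀ x y : A, MulAction.stabilizer G x = MulAction.stabilizer G y)
    (α : gSetCongruences G A) :
    IsStandardElement α ↔ ((α : Setoid A) = ⊥ ∨ (α : Setoid A) = ⊤) := by
  constructor
  · intro H
    by_contra hcon
    push Not at hcon
    obtain ⟨hb, ht⟩ := hcon
    have same : ∀ (c : A) (g : G), (α : Setoid A) c (g • c) → c = g • c := by
      intro c g h
      by_contra hc
      exact ht (aux_case1 hnt hstab α H c g h hc)
    apply hb
    rw [eq_bot_iff]
    intro c d hcd
    change c = d
    by_contra hne
    have hdiff : ∀ g : G, g • c ≠ d := by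
      rintro g rfl
      exact hne (same c g hcd)
    by_cases htr : ∀ g : G, g • d = d
    · have htr' : ∀ (g : G) (x : A), g • x = x := by
        intro g x
        have := aux_smul_eq hstab d x g 1 (by rw [htr, one_smul])
        rwa [one_smul] at this
      have all : ∀ e, (α : Setoid A) c e := by
        intro e
        by_cases h1 : c = e
        · subst h1
          exact Setoid.refl' _ _
        by_cases h2 : d = e
        · subst h2
          exact hcd
        exact aux_third hstab α H c d e hcd hne (fun g => by rwa [htr'])
          (fun g => by rwa [htr'])
      apply ht
      rw [eq_top_iff]
      intro u v _
      exact Setoid.trans' _ (Setoid.symm' _ (all u)) (all v)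
    · push Not at htr
      obtain ⟨g, hg⟩ := htr
      have hc2 : ∀ k : G, k • c ≠ g • d := fun k => aux_orb hdiff k g
      refine hg (same d g ?_).symm
      refine aux_step α H (auxTheta hstab c (g • d) hc2) (MulAction.orbitRel G A)
        (auxTheta_mem _ _ _ _) ?_ ?_ d c (g • d) (Setoid.symm' _ hcd) (auxTheta_self _ _ _ _) ?_
      · rintro k x y ⟨l, rfl⟩
        exact ⟨k * l * k⁻¹, by simp [mul_smul]⟩
      · rintro u v (h1 | ⟨k, ⟨rfl, rfl⟩ | ⟨rfl, rfl⟩⟩) ⟨l, hl⟩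
        · exact h1
        · refine absurd ?_ (aux_orb hc2 k (l * k))
          rw [mul_smul]
          exact hl.symm
        · refine absurd ?_ (aux_orb hc2 (l * k) k)
          rw [mul_smul]
          exact hl
      · exact ⟨g⁻¹, inv_smul_smul _ _⟩
  · rintro (h | h) y z
    · apply Subtype.ext
      change ((α : Setoid A) ⊔ y) ⊓ z = ((α : Setoid A) ⊓ z) ⊔ ((y : Setoid A) ⊓ z)
      rw [h, bot_sup_eq, bot_inf_eq, bot_sup_eq]
    · apply Subtype.ext
      change ((α : Setoid A) ⊔ y) ⊓ z = ((α : Setoid A) ⊓ z) ⊔ ((y : Setoid A) ⊓ z)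
      rw [h, top_sup_eq, top_inf_eq, eq_comm, sup_eq_left]
      exact inf_le_right
end

section
/- Let G be a group acting on a set A such that the action is not transitive and the stabilizers of any two points of A coincide (for all x, y ∈ A, Stab(x) = Stab(y)). Then a congruence α on the G-set A is a neutral element of the congruence lattice Con(A) if and only if α is the equality relation or the universal relation on A. -/
theorem neutral_contra {G A : Type*} [Group G] [MulAction G A]
    {α : gSetCongruences G A} (hα : IsNeutralElement α) (β γ : gSetCongruences G A)
    (h1 : ∀ a b, α.1 a b → β.1 a b → a = b) (h2 : ∀ a b, β.1 a b → γ.1 a b → a = b)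
    (h3 : ∀ a b, γ.1 a b → α.1 a b → a = b) {x y : A}
    (k1 : (α.1 ⊔ β.1) x y) (k2 : (β.1 ⊔ γ.1) x y) (k3 : (γ.1 ⊔ α.1) x y) : x = y := by
  have h := congrArg Subtype.val (hα β γ)
  have e : ((α.1 ⊔ β.1) ⊓ (β.1 ⊔ γ.1) ⊓ (γ.1 ⊔ α.1) : Setoid A)
      = (α.1 ⊓ β.1) ⊔ (β.1 ⊓ γ.1) ⊔ (γ.1 ⊓ α.1) := h
  have e1 : α.1 ⊓ β.1 = ⊥ := le_bot_iff.1 fun a b h => h1 a b h.1 h.2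
  have e2 : β.1 ⊓ γ.1 = ⊥ := le_bot_iff.1 fun a b h => h2 a b h.1 h.2
  have e3 : γ.1 ⊓ α.1 = ⊥ := le_bot_iff.1 fun a b h => h3 a b h.1 h.2
  rw [e1, e2, e3, sup_bot_eq, sup_bot_eq] at e
  have k : ((α.1 ⊔ β.1) ⊓ (β.1 ⊔ γ.1) ⊓ (γ.1 ⊔ α.1) : Setoid A) x y := ⟨⟨k1, k2⟩, k3⟩
  rw [e] at k
  exact k

theorem stab_smul_eq {G A : Type*} [Group G] [MulAction G A]
    (hstab : ∀ x y : A, MulAction.stabilizer G x = MulAction.stabilizer G y) (x y : A)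
    {g k : G} (h : g • x = k • x) : g • y = k • y := by
  have h' : k⁻¹ * g ∈ MulAction.stabilizer G x := by
    rw [MulAction.mem_stabilizer_iff, mul_smul, h, inv_smul_smul]
  rw [hstab x y, MulAction.mem_stabilizer_iff, mul_smul, inv_smul_eq_iff] at h'
  exact h'

theorem ne_of_orbit {G A : Type*} [Group G] [MulAction G A] {x y : A}
    (hxy : ∀ g : G, g • x ≠ y) (g k : G) : g • x ≠ k • y := by
  intro h
  apply hxy (k⁻¹ * g)
  rw [mul_smul, h, inv_smul_smul]

/-- The congruence linking two orbits. -/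
def linkCong {G A : Type*} [Group G] [MulAction G A]
    (hstab : ∀ x y : A, MulAction.stabilizer G x = MulAction.stabilizer G y) (x y : A)
    (hxy : ∀ g : G, g • x ≠ y) : gSetCongruences G A :=
  ⟨{ r := fun a b => a = b ∨ ∃ g : G, (a = g • x ∧ b = g • y) ∨ (a = g • y ∧ b = g • x)
     iseqv := by
      refine ⟨fun a => Or.inl rfl, ?_, ?_⟩
      · rintro a b (h | ⟨g, h | h⟩)
        · exact Or.inl h.symm
        · exact Or.inr ⟨g, Or.inr h.symm⟩
        · exact Or.inr ⟨g, Or.inl h.symm⟩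
      · rintro a b c (rfl | ⟨g, ⟨rfl, rfl⟩ | ⟨rfl, rfl⟩⟩) (h' | ⟨k, ⟨h, rfl⟩ | ⟨h, rfl⟩⟩)
        · exact Or.inl h'
        · exact Or.inr ⟨k, Or.inl ⟨h, rfl⟩⟩
        · exact Or.inr ⟨k, Or.inr ⟨h, rfl⟩⟩
        · exact Or.inr ⟨g, Or.inl ⟨rfl, h'.symm⟩⟩
        · exact (ne_of_orbit hxy _ _ h.symm).elim
        · exact Or.inl (stab_smul_eq hstab y x h)
        · exact Or.inr ⟨g, Or.inr ⟨rfl, h'.symm⟩⟩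
        · exact Or.inl (stab_smul_eq hstab x y h)
        · exact (ne_of_orbit hxy _ _ h).elim }, by
    rintro k a b (rfl | ⟨g, ⟨rfl, rfl⟩ | ⟨rfl, rfl⟩⟩)
    · exact Or.inl rfl
    · exact Or.inr ⟨k * g, Or.inl ⟨(mul_smul _ _ _).symm, (mul_smul _ _ _).symm⟩⟩
    · exact Or.inr ⟨k * g, Or.inr ⟨(mul_smul _ _ _).symm, (mul_smul _ _ _).symm⟩⟩⟩

/-- The congruence collapsing one orbit. -/
def orbCong {G A : Type*} [Group G] [MulAction G A] (x : A) : gSetCongruences G A :=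
  ⟨{ r := fun a b => a = b ∨ ((∃ g : G, a = g • x) ∧ ∃ g : G, b = g • x)
     iseqv := by
      refine ⟨fun a => Or.inl rfl, ?_, ?_⟩
      · rintro a b (h | h)
        · exact Or.inl h.symm
        · exact Or.inr h.symm
      · rintro a b c (rfl | h) (rfl | h')
        · exact Or.inl rfl
        · exact Or.inr h'
        · exact Or.inr h
        · exact Or.inr ⟨h.1, h'.2⟩ }, by
    rintro k a b (rfl | ⟨⟨g, rfl⟩, ⟨g', rfl⟩⟩)
    · exact Or.inl rfl
    · exact Or.inr ⟨⟨k * g, (mul_smul _ _ _).symm⟩, ⟨k * g', (mul_smul _ _ _).symm⟩⟩⟩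

theorem linkCong_self {G A : Type*} [Group G] [MulAction G A]
    (hstab : ∀ x y : A, MulAction.stabilizer G x = MulAction.stabilizer G y) (x y : A)
    (hxy : ∀ g : G, g • x ≠ y) : (linkCong hstab x y hxy).1 x y :=
  Or.inr ⟨1, Or.inl ⟨(one_smul _ _).symm, (one_smul _ _).symm⟩⟩

theorem cong_cancel {G A : Type*} [Group G] [MulAction G A] (α : gSetCongruences G A)
    {g : G} {x y : A} (h : α.1 (g • x) (g • y)) : α.1 x y := by
  have := α.2 g⁻¹ _ _ h
  rwa [inv_smul_smul, inv_smul_smul] at this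

theorem linkCong_disj {G A : Type*} [Group G] [MulAction G A]
    (hstab : ∀ x y : A, MulAction.stabilizer G x = MulAction.stabilizer G y) (x y : A)
    (hxy : ∀ g : G, g • x ≠ y) (α : gSetCongruences G A) (h : ¬ α.1 x y) (a b : A)
    (h1 : α.1 a b) (h2 : (linkCong hstab x y hxy).1 a b) : a = b := by
  rcases h2 with h2 | ⟨g, ⟨rfl, rfl⟩ | ⟨rfl, rfl⟩⟩
  · exact h2
  · exact (h (cong_cancel α h1)).elim
  · exact (h (cong_cancel α (α.1.symm' h1))).elim

theorem neutral_third {G A : Type*} [Group G] [MulAction G A]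
    (hstab : ∀ x y : A, MulAction.stabilizer G x = MulAction.stabilizer G y)
    {α : gSetCongruences G A} (hα : IsNeutralElement α) {x y z : A} (hxy : α.1 x y)
    (hne : x ≠ y) (hxz : ∀ g : G, g • x ≠ z) (hyz : ∀ g : G, g • y ≠ z) : α.1 x z := by
  by_contra hn
  have hn' : ¬ α.1 y z := fun h => hn (α.1.trans' hxy h)
  refine hne (neutral_contra hα (linkCong hstab x z hxz) (linkCong hstab y z hyz)
    (linkCong_disj hstab x z hxz α hn) ?_
    (fun a b h h' => linkCong_disj hstab y z hyz α hn' a b h' h)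
    ((le_sup_left : α.1 ≤ _) hxy) ?_ ((le_sup_right : α.1 ≤ _) hxy))
  · intro a b h h'
    refine linkCong_disj hstab y z hyz (linkCong hstab x z hxz) ?_ a b h h'
    rintro (h | ⟨g, ⟨h, h'⟩ | ⟨h, h'⟩⟩)
    · exact hyz 1 (by rw [one_smul, h])
    · apply hne
      have := stab_smul_eq hstab z x (g := 1) (k := g) (by rw [one_smul, ← h'])
      rw [h, ← this, one_smul]
    · exact hxz g h'.symm
  · exact Setoid.trans' _ ((le_sup_left : (linkCong hstab x z hxz).1 ≤ _)
      (linkCong_self hstab x z hxz)) ((le_sup_right : (linkCong hstab y z hyz).1 ≤ _)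
      (Setoid.symm' _ (linkCong_self hstab y z hyz)))

theorem neutral_same {G A : Type*} [Group G] [MulAction G A]
    (hnt : ¬ ∀ a b : A, ∃ g : G, g • a = b)
    (hstab : ∀ x y : A, MulAction.stabilizer G x = MulAction.stabilizer G y)
    {α : gSetCongruences G A} (hα : IsNeutralElement α) {x : A} {k : G}
    (hxy : α.1 x (k • x)) (hne : x ≠ k • x) : α.1 = ⊤ := by
  have h1 : ∀ z, (∀ g : G, g • x ≠ z) → α.1 x z := fun z hz =>
    neutral_third hstab hα hxy hne hz fun g => by rw [← mul_smul]; exact hz _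
  have hz : ∃ z, ∀ g : G, g • x ≠ z := by
    by_contra! hc
    apply hnt
    intro a b
    obtain ⟨g, rfl⟩ := hc a
    obtain ⟨g', rfl⟩ := hc b
    exact ⟨g' * g⁻¹, by rw [mul_smul, inv_smul_smul]⟩
  obtain ⟨z, hz⟩ := hz
  have h2 : ∀ w, α.1 x w := by
    intro w
    by_cases hw : ∀ g : G, g • x ≠ w
    · exact h1 w hw
    · push Not at hw
      obtain ⟨g, rfl⟩ := hw
      exact α.1.trans' (h1 (g • z) fun g' => ne_of_orbit hz g' g)
        (α.1.symm' (α.2 g _ _ (h1 z hz)))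
  exact top_le_iff.1 fun a b _ => α.1.trans' (α.1.symm' (h2 a)) (h2 b)

theorem neutral_top {G A : Type*} [Group G] [MulAction G A]
    (hnt : ¬ ∀ a b : A, ∃ g : G, g • a = b)
    (hstab : ∀ x y : A, MulAction.stabilizer G x = MulAction.stabilizer G y)
    {α : gSetCongruences G A} (hα : IsNeutralElement α) {x y : A}
    (hxy : α.1 x y) (hne : x ≠ y) : α.1 = ⊤ := by
  by_cases hs : ∃ (w : A) (k : G), α.1 w (k • w) ∧ w ≠ k • w
  · obtain ⟨w, k, h, h'⟩ := hs
    exact neutral_same hnt hstab hα h h'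
  push Not at hs
  have hd : ∀ g : G, g • x ≠ y := by
    rintro g rfl
    exact hne (hs _ _ hxy)
  have htriv : ∀ h : G, x = h • x := by
    intro h
    by_contra hx
    have hy : y ≠ h • y := fun e => hx (by
      have := stab_smul_eq hstab y x (g := 1) (k := h) (by rwa [one_smul])
      rwa [one_smul] at this)
    have hd' : ∀ g : G, g • x ≠ h • y := fun g => ne_of_orbit hd g h
    have hβα : ¬ α.1 x (h • y) := fun e =>
      hy (hs _ _ (α.1.trans' (α.1.symm' hxy) e))
    have hγα : ∀ a b, (orbCong (G := G) x).1 a b → α.1 a b → a = b := by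
      rintro a b (e | ⟨⟨g, rfl⟩, ⟨g', rfl⟩⟩) e'
      · exact e
      · have : g' • x = (g' * g⁻¹) • (g • x) := by rw [mul_smul, inv_smul_smul]
        rw [this] at e' ⊢
        exact hs _ _ e'
    have hγ : (orbCong (G := G) x).1 x (h • x) :=
      Or.inr ⟨⟨1, (one_smul _ _).symm⟩, ⟨h, rfl⟩⟩
    refine hx (neutral_contra hα (linkCong hstab x (h • y) hd') (orbCong x)
      (linkCong_disj hstab _ _ hd' α hβα) ?_ hγα ?_
      ((le_sup_right : (orbCong (G := G) x).1 ≤ _) hγ)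
      ((le_sup_left : (orbCong (G := G) x).1 ≤ _) hγ))
    · intro a b e e'
      refine linkCong_disj hstab _ _ hd' (orbCong x) ?_ a b e' e
      rintro (e | ⟨-, ⟨g, e⟩⟩)
      · exact hd' 1 (by rw [one_smul, ← e])
      · exact hd' g e.symm
    · exact Setoid.trans' _ ((le_sup_right : (linkCong hstab x (h • y) hd').1 ≤ _)
        (linkCong_self hstab _ _ hd')) ((le_sup_left : α.1 ≤ _)
        (α.1.symm' (α.2 h _ _ hxy)))
  have htriv' : ∀ (h : G) (w : A), h • w = w := fun h w => by
    have := stab_smul_eq hstab x w (g := h) (k := 1) (by rw [one_smul, ← htriv])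
    rwa [one_smul] at this
  have h2 : ∀ w, α.1 x w := by
    intro w
    by_cases h : x = w
    · exact h ▸ α.1.refl' x
    by_cases h' : y = w
    · exact h' ▸ hxy
    exact neutral_third hstab hα hxy hne (fun g => by rwa [htriv']) (fun g => by rwa [htriv'])
  exact top_le_iff.1 fun a b _ => α.1.trans' (α.1.symm' (h2 a)) (h2 b)

/-- Let `G` be a group acting non-transitively on a set `A` such that the stabilizers of
any two points of `A` coincide. A congruence `α` on the `G`-set `A` is a neutral
element of the congruence lattice `Con(A)` if and only if `α` is the equality relation
(`⊥`) or the universal relation (`⊤`) on `A`. -/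
theorem gSetCongruence_isNeutralElement_iff (G A : Type*) [Group G] [MulAction G A]
    (hnt : ¬ ∀ a b : A, ∃ g : G, g • a = b)
    (hstab : ∀ x y : A, MulAction.stabilizer G x = MulAction.stabilizer G y)
    (α : gSetCongruences G A) :
    IsNeutralElement α ↔ ((α : Setoid A) = ⊥ ∨ (α : Setoid A) = ⊤) := by
  constructor
  · intro hα
    by_cases h : ∃ x y, α.1 x y ∧ x ≠ y
    · obtain ⟨x, y, h, h'⟩ := h
      exact Or.inr (neutral_top hnt hstab hα h h')
    · push Not at h
      exact Or.inl (le_bot_iff.1 fun a b e => h a b e)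
  · rintro h y z
    apply Subtype.ext
    change ((α.1 ⊔ y.1) ⊓ (y.1 ⊔ z.1) ⊓ (z.1 ⊔ α.1) : Setoid A)
      = (α.1 ⊓ y.1) ⊔ (y.1 ⊓ z.1) ⊔ (z.1 ⊓ α.1)
    rcases h with h | h
    · rw [h, bot_sup_eq, sup_bot_eq, bot_inf_eq, inf_bot_eq, bot_sup_eq, sup_bot_eq,
        inf_sup_self]
    · rw [h, top_sup_eq, sup_top_eq, top_inf_eq, inf_top_eq, top_inf_eq, inf_top_eq,
        sup_inf_self]
end
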